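/- arXiv:2401.05927 — 13 statements merged into one kernel-verified Lean document; each statement's English description precedes it below -/
import Mathlib

section
/- Let F be a field and L a finite-dimensional toral Lie algebra over F. Then no adjoint endomorphism of L has a nonzero eigenvalue in F: for all x, y ∈ L and every scalar λ ∈ F with λ ≠ 0, the equation ⁅x, y⁆ = λ • y implies y = 0. -/
set_option autoImplicit false

/-- A Lie algebra `L` over a field `F` is *toral* if for every `x ∈ L` the adjoint
endomorphism `ad x : L → L`, `y ↦ ⁅x, y⁆`, is semisimple, i.e. every `ad x`-invariant
`F`-subspace of `L` has an `ad x`-invariant complement. -/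
def IsToral (F L : Type*) [Field F] [LieRing L] [LieAlgebra F L] : Prop :=
  ∀ x : L, ∀ p : Submodule F L, (∀ y ∈ p, ⁅x, y⁆ ∈ p) →
    ∃ q : Submodule F L, (∀ y ∈ q, ⁅x, y⁆ ∈ q) ∧ IsCompl p q

/-- In a finite-dimensional toral Lie algebra, no adjoint endomorphism has a nonzero
eigenvalue: `⁅x, y⁆ = λ • y` with `λ ≠ 0` forces `y = 0`. -/
theorem stmt_0 (F L : Type*) [Field F] [LieRing L] [LieAlgebra F L]
    [FiniteDimensional F L] (hL : IsToral F L) :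
    ∀ (x y : L) (lam : F), lam ≠ 0 → ⁅x, y⁆ = lam • y → y = 0 := by
  intro x y lam hlam h
  obtain ⟨q, hq, hc⟩ := hL y (Submodule.span F {y}) (by
    intro z hz
    obtain ⟨a, rfl⟩ := Submodule.mem_span_singleton.1 hz
    simp)
  have hx : x ∈ Submodule.span F {y} ⊔ q := by rw [hc.sup_eq_top]; trivial
  obtain ⟨u, hu, z, hz, rfl⟩ := Submodule.mem_sup.1 hx
  obtain ⟨a, rfl⟩ := Submodule.mem_span_singleton.1 hu
  have h1 : ⁅z, y⁆ = lam • y := by simpa using h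
  have h2 : lam • y ∈ q := by
    rw [← h1, ← lie_skew]
    exact q.neg_mem (hq z hz)
  have h3 : lam • y ∈ Submodule.span F {y} :=
    Submodule.smul_mem _ _ (Submodule.mem_span_singleton_self y)
  have h4 : lam • y = 0 := Submodule.disjoint_def.1 hc.disjoint _ h3 h2
  exact (smul_eq_zero.1 h4).resolve_left hlam
end

section
/- Let F be a field and L a finite-dimensional toral Lie algebra over F such that for every x ∈ L the characteristic polynomial of the endomorphism ad x splits over F. Then L is abelian, i.e., ⁅x, y⁆ = 0 for all x, y ∈ L. -/
/-- If `L` is a finite-dimensional toral Lie algebra over `F` such that the characteristic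
polynomial of every adjoint endomorphism `ad x` splits over `F`, then `L` is abelian. -/
theorem stmt_1 (F L : Type*) [Field F] [LieRing L] [LieAlgebra F L]
    [FiniteDimensional F L] (hL : IsToral F L)
    (hsplit : ∀ x : L,
      Polynomial.Splits (LinearMap.charpoly (LieAlgebra.ad F L x))) :
    ∀ x y : L, ⁅x, y⁆ = 0 := by
  have key : ∀ y v : L, ⁅y, ⁅y, v⁆⁆ = 0 → ⁅y, v⁆ = 0 := by
    intro y v h
    obtain ⟨q, hq, hc⟩ := hL y (LinearMap.ker (LieAlgebra.ad F L y)) (by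
      intro z hz
      have hz' : ⁅y, z⁆ = 0 := by simpa using hz
      simp [hz'])
    have hv : v ∈ LinearMap.ker (LieAlgebra.ad F L y) ⊔ q := by
      rw [hc.sup_eq_top]; trivial
    obtain ⟨k, hk, w, hw, rfl⟩ := Submodule.mem_sup.mp hv
    have hk' : ⁅y, k⁆ = 0 := by simpa using hk
    have h1 : ⁅y, k + w⁆ = ⁅y, w⁆ := by simp [hk']
    rw [h1] at h ⊢
    exact Submodule.disjoint_def.mp hc.disjoint _ (by simpa using h) (hq w hw)
  intro x y
  have hroot : ∀ a ∈ (LinearMap.charpoly (LieAlgebra.ad F L x)).roots, a = 0 := by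
    intro a ha
    have hr := (Polynomial.mem_roots'.mp ha).2
    rw [← Module.End.hasEigenvalue_iff_isRoot_charpoly] at hr
    obtain ⟨v, hv⟩ := hr.exists_hasEigenvector
    have hxv : ⁅x, v⁆ = a • v := by simpa using hv.apply_eq_smul
    have hvx : ⁅v, x⁆ = -(a • v) := by rw [← lie_skew, hxv]
    have h0 := key v x (by rw [hvx]; simp)
    rw [hvx, neg_eq_zero, smul_eq_zero] at h0
    exact h0.resolve_right hv.2
  have hch := (hsplit x).eq_prod_roots_of_monic (LinearMap.charpoly_monic _)
  rw [Multiset.eq_replicate_of_mem hroot] at hch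
  have hT := LinearMap.aeval_self_charpoly (LieAlgebra.ad F L x)
  rw [hch] at hT
  simp only [Multiset.map_replicate, Multiset.prod_replicate, map_zero, sub_zero, map_pow,
    Polynomial.aeval_X] at hT
  have hss : Module.End.IsSemisimple (LieAlgebra.ad F L x) := by
    rw [Module.End.isSemisimple_iff]
    intro p hp
    obtain ⟨q, hq, hc⟩ := hL x p hp
    exact ⟨q, hq, hc⟩
  have := Module.End.eq_zero_of_isNilpotent_isSemisimple ⟨_, hT⟩ hss
  simpa using LinearMap.congr_fun this y
end

section
/- Let F be a field and L a finite-dimensional toral Lie algebra over F with L ≠ 0. Then there exists a Lie ideal I of L with I ≠ L such that the quotient Lie algebra L/I is toral and L/I is either simple or abelian. -/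
set_option autoImplicit false

/-- Every nonzero finite-dimensional toral Lie algebra has a proper Lie ideal `I` such
that the quotient `L ⧸ I` is toral and either simple or abelian. -/
theorem stmt_2 (F L : Type*) [Field F] [LieRing L] [LieAlgebra F L]
    [FiniteDimensional F L] [Nontrivial L] (hL : IsToral F L) :
    ∃ I : LieIdeal F L, I ≠ ⊤ ∧ IsToral F (L ⧸ I) ∧
      (LieAlgebra.IsSimple F (L ⧸ I) ∨ IsLieAbelian (L ⧸ I)) := by
  obtain ⟨I, hI, -⟩ := (eq_top_or_exists_le_coatom (⊥ : LieIdeal F L)).resolve_left bot_ne_top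
  have hsurj : Function.Surjective (LieSubmodule.Quotient.mk (N := I)) := Quot.mk_surjective
  refine ⟨I, hI.1, ?_, ?_⟩
  · intro x p hp
    obtain ⟨x, rfl⟩ := hsurj x
    let π : L →ₗ[F] (L ⧸ I) := (LieSubmodule.Quotient.mk' I : L →ₗ[F] (L ⧸ I))
    have hπs : Function.Surjective π := hsurj
    have hπ : ∀ a b : L, π ⁅a, b⁆ = ⁅π a, π b⁆ := fun a b => rfl
    obtain ⟨q, hq, hc⟩ := hL x (p.comap π) (fun y hy => by
      rw [Submodule.mem_comap, hπ]
      exact hp _ hy)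
    refine ⟨q.map π, ?_, ?_, ?_⟩
    · rintro _ ⟨z, hz, rfl⟩
      exact ⟨⁅x, z⁆, hq z hz, hπ x z⟩
    · rw [Submodule.disjoint_def]
      rintro _ hy ⟨z, hz, rfl⟩
      rw [Submodule.disjoint_def.1 hc.disjoint z hy hz, map_zero]
    · rw [codisjoint_iff, ← Submodule.map_comap_eq_of_surjective hπs p, ← Submodule.map_sup,
        hc.sup_eq_top, Submodule.map_top, LinearMap.range_eq_top.2 hπs]
  · by_cases hab : IsLieAbelian (L ⧸ I)
    · exact Or.inr hab
    refine Or.inl ⟨fun J => ?_, hab⟩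
    let K : LieIdeal F L :=
      { (J : Submodule F (L ⧸ I)).comap (LieSubmodule.Quotient.mk' I : L →ₗ[F] (L ⧸ I)) with
        lie_mem := fun {x m} hm => J.lie_mem (x := LieSubmodule.Quotient.mk x) hm }
    have hK : ∀ z, z ∈ K ↔ LieSubmodule.Quotient.mk (N := I) z ∈ J := fun z => Iff.rfl
    have hIK : I ≤ K := fun z hz => by
      rw [hK, (LieSubmodule.Quotient.mk_eq_zero' (N := I)).2 hz]
      exact J.zero_mem
    rcases hI.le_iff.1 hIK with h | h
    · right
      rw [eq_top_iff]
      intro y _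
      obtain ⟨z, rfl⟩ := hsurj y
      rw [← hK, h]
      trivial
    · left
      rw [eq_bot_iff]
      intro y hy
      obtain ⟨z, rfl⟩ := hsurj y
      rw [← hK, h] at hy
      rw [(LieSubmodule.Quotient.mk_eq_zero' (N := I)).2 hy]
      exact LieSubmodule.zero_mem _
end

section
/- Let F be a field of characteristic 0 and L a nontrivial finite-dimensional Lie algebra over F. Then L is pluperfect if and only if L is perfect and the quotient Q = L/Rad(L) of L by its radical decomposes as a finite (possibly empty) internal direct sum of Lie ideals, each of which, regarded as a Lie algebra over F, is simple and pluperfect. -/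
set_option autoImplicit false

/-- A Lie algebra `L` is *pluperfect* if every toral quotient of `L` is trivial:
for every Lie ideal `I` with `L ⧸ I` toral, one has `I = ⊤`. -/
def IsPluperfect (F L : Type*) [Field F] [LieRing L] [LieAlgebra F L] : Prop :=
  ∀ I : LieIdeal F L, IsToral F (L ⧸ I) → I = ⊤

theorem toral_of_inj {F A B : Type*} [Field F] [LieRing A] [LieAlgebra F A]
    [LieRing B] [LieAlgebra F B] (f : A →ₗ⁅F⁆ B) (hf : Function.Injective f)
    (hB : IsToral F B) : IsToral F A := by
  intro x p hp
  obtain ⟨q, hq, hc⟩ := hB (f x) (p.map (f : A →ₗ[F] B)) (by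
    rintro _ ⟨y, hy, rfl⟩
    exact ⟨⁅x, y⁆, hp y hy, by simp⟩)
  refine ⟨q.comap (f : A →ₗ[F] B), ?_, ?_, ?_⟩
  · intro y hy
    have : ⁅f x, f y⁆ ∈ q := hq _ hy
    simpa using this
  · rw [Submodule.disjoint_def]
    intro y hy hyq
    have := Submodule.disjoint_def.1 hc.1 (f y) ⟨y, hy, rfl⟩ hyq
    exact hf (by simpa using this)
  · rw [codisjoint_iff, eq_top_iff]
    intro a _
    have : f a ∈ p.map (f : A →ₗ[F] B) ⊔ q := by rw [hc.sup_eq_top]; trivial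
    obtain ⟨_, ⟨y, hy, rfl⟩, z, hz, h⟩ := Submodule.mem_sup.1 this
    refine Submodule.mem_sup.2 ⟨y, hy, a - y, ?_, by abel⟩
    have h2 : z = f (a - y) := by rw [map_sub, ← h]; simp
    show f (a - y) ∈ q
    rwa [← h2]

theorem toral_of_surj {F A B : Type*} [Field F] [LieRing A] [LieAlgebra F A]
    [LieRing B] [LieAlgebra F B] (f : A →ₗ⁅F⁆ B) (hf : Function.Surjective f)
    (hA : IsToral F A) : IsToral F B := by
  intro x p hp
  obtain ⟨x, rfl⟩ := hf x
  obtain ⟨q, hq, hc⟩ := hA x (p.comap (f : A →ₗ[F] B)) (by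
    intro y hy
    have : ⁅f x, f y⁆ ∈ p := hp _ hy
    simpa using this)
  refine ⟨q.map (f : A →ₗ[F] B), ?_, ?_, ?_⟩
  · rintro _ ⟨y, hy, rfl⟩
    exact ⟨⁅x, y⁆, hq y hy, by simp⟩
  · rw [Submodule.disjoint_def]
    rintro _ hy ⟨y, hyq, rfl⟩
    have := Submodule.disjoint_def.1 hc.1 y hy hyq
    simp [this]
  · rw [codisjoint_iff, eq_top_iff]
    intro b _
    obtain ⟨a, rfl⟩ := hf b
    have : a ∈ p.comap (f : A →ₗ[F] B) ⊔ q := by rw [hc.sup_eq_top]; trivial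
    obtain ⟨y, hy, z, hz, h⟩ := Submodule.mem_sup.1 this
    exact Submodule.mem_sup.2 ⟨f y, hy, f z, ⟨z, hz, rfl⟩, by rw [← map_add, h]⟩

theorem pluperfect_hom {F A T : Type*} [Field F] [LieRing A] [LieAlgebra F A]
    [LieRing T] [LieAlgebra F T] (hA : IsPluperfect F A) (hT : IsToral F T)
    (g : A →ₗ⁅F⁆ T) (a : A) : g a = 0 := by
  have h1 : IsToral F g.range := toral_of_inj g.range.incl Subtype.val_injective hT
  have h2 : IsToral F (A ⧸ g.ker) :=
    toral_of_inj (g.quotKerEquivRange : (A ⧸ g.ker) →ₗ⁅F⁆ g.range)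
      g.quotKerEquivRange.injective h1
  have h3 := hA _ h2
  have : a ∈ g.ker := by rw [h3]; trivial
  simpa using this

/-- quotient map -/
def qmk {F A : Type*} [Field F] [LieRing A] [LieAlgebra F A] (I : LieIdeal F A) :
    A →ₗ⁅F⁆ (A ⧸ I) where
  toLinearMap := (LieSubmodule.Quotient.mk' I : A →ₗ[F] A ⧸ I)
  map_lie' := by intro x y; exact LieSubmodule.Quotient.mk_bracket I x y

theorem qmk_surj {F A : Type*} [Field F] [LieRing A] [LieAlgebra F A] (I : LieIdeal F A) :
    Function.Surjective (qmk I) := LieSubmodule.Quotient.surjective_mk' I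

theorem qmk_eq_zero {F A : Type*} [Field F] [LieRing A] [LieAlgebra F A] (I : LieIdeal F A)
    (a : A) : qmk I a = 0 ↔ a ∈ I := LieSubmodule.Quotient.mk_eq_zero I

theorem pluperfect_surj {F A B : Type*} [Field F] [LieRing A] [LieAlgebra F A]
    [LieRing B] [LieAlgebra F B] (f : A →ₗ⁅F⁆ B) (hf : Function.Surjective f)
    (hA : IsPluperfect F A) : IsPluperfect F B := by
  intro I hI
  rw [eq_top_iff]
  intro b _
  obtain ⟨a, rfl⟩ := hf b
  exact (qmk_eq_zero I _).1 (pluperfect_hom hA hI ((qmk I).comp f) a)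

theorem abelian_ideal_central {F T : Type*} [Field F] [LieRing T] [LieAlgebra F T]
    (hT : IsToral F T) (I : LieIdeal F T) (hI : IsLieAbelian I) (a : T) (ha : a ∈ I) (y : T) :
    ⁅a, y⁆ = 0 := by
  have hab : ∀ b ∈ I, ⁅a, b⁆ = 0 := by
    intro b hb
    have := hI.trivial ⟨a, ha⟩ ⟨b, hb⟩
    simpa using congrArg Subtype.val this
  let p : Submodule F T :=
    { carrier := {y | ⁅a, y⁆ = 0}
      add_mem' := by intro u v hu hv; simp_all
      zero_mem' := by simp
      smul_mem' := by intro c u hu; simp_all }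
  obtain ⟨q, hq, hc⟩ := hT a p (by
    intro y hy
    have : ⁅a, y⁆ = 0 := hy
    rw [this]; exact p.zero_mem)
  have hqb : ∀ y ∈ q, y ∈ p := by
    intro y hy
    have h1 : ⁅a, y⁆ ∈ p := hab _ (lie_mem_left F T I a y ha)
    exact Submodule.disjoint_def.1 hc.1 _ h1 (hq y hy)
  have : y ∈ p ⊔ q := by rw [hc.sup_eq_top]; trivial
  rw [sup_eq_left.2 hqb] at this
  exact this

theorem trivRad_quot (F L : Type*) [Field F] [LieRing L] [LieAlgebra F L]
    [FiniteDimensional F L] : LieAlgebra.HasTrivialRadical F (L ⧸ LieAlgebra.radical F L) := by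
  rw [LieAlgebra.hasTrivialRadical_iff_no_abelian_ideals]
  intro A hA
  let R := LieAlgebra.radical F L
  let A' : LieIdeal F L := A.comap (qmk R)
  have h1 : ⁅A', A'⁆ ≤ R := by
    rw [LieSubmodule.lieIdeal_oper_eq_span, LieSubmodule.lieSpan_le]
    rintro _ ⟨⟨x, hx⟩, ⟨y, hy⟩, rfl⟩
    have hx' : qmk R x ∈ A := by simpa [A'] using hx
    have hy' : qmk R y ∈ A := by simpa [A'] using hy
    have := congrArg Subtype.val (hA.trivial ⟨_, hx'⟩ ⟨_, hy'⟩)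
    apply (qmk_eq_zero R _).1
    simpa using this
  have hs : LieAlgebra.IsSolvable R := LieAlgebra.radicalIsSolvable F L
  obtain ⟨k, hk⟩ := (LieAlgebra.isSolvable_iff F R).1 hs
  have hk' : LieAlgebra.derivedSeriesOfIdeal F L k R = ⊥ := (LieIdeal.derivedSeries_eq_bot_iff R k).1 hk
  have h2 : LieAlgebra.IsSolvable A' := by
    apply LieAlgebra.IsSolvable.mk (R := F) (k := k + 1)
    rw [LieIdeal.derivedSeries_eq_bot_iff, LieAlgebra.derivedSeriesOfIdeal_add, eq_bot_iff, ← hk']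
    apply LieAlgebra.derivedSeriesOfIdeal_mono
    simpa using h1
  have h3 := (LieAlgebra.LieIdeal.solvable_iff_le_radical F L A').1 h2
  rw [eq_bot_iff]
  intro b hb
  obtain ⟨a, rfl⟩ := qmk_surj R b
  have : a ∈ A' := by simpa [A'] using hb
  simpa using (qmk_eq_zero R a).2 (h3 this)

theorem perfect_span {F L : Type*} [Field F] [LieRing L] [LieAlgebra F L]
    (h : ⁅(⊤ : LieIdeal F L), (⊤ : LieIdeal F L)⁆ = ⊤)
    (p : Submodule F L) (hp : ∀ a b : L, ⁅a, b⁆ ∈ p) (x : L) : x ∈ p := by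
  have hx : x ∈ (⁅(⊤ : LieIdeal F L), (⊤ : LieIdeal F L)⁆).toSubmodule := by rw [h]; trivial
  rw [LieSubmodule.lieIdeal_oper_eq_linear_span'] at hx
  refine Submodule.span_le.2 ?_ hx
  rintro _ ⟨a, -, b, -, rfl⟩
  exact hp a b

theorem map_solvable_zero {F L S : Type*} [Field F] [LieRing L] [LieAlgebra F L]
    [LieRing S] [LieAlgebra F S] (h : L →ₗ⁅F⁆ S) (hs : Function.Surjective h)
    (hS : LieAlgebra.HasTrivialRadical F S) (I : LieIdeal F L) [hI : LieAlgebra.IsSolvable I]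
    (x : L) (hx : x ∈ I) : h x = 0 := by
  obtain ⟨k, hk⟩ := (LieAlgebra.isSolvable_iff F I).1 hI
  rw [LieIdeal.derivedSeries_eq_bot_iff] at hk
  have key : ∀ k, LieAlgebra.derivedSeriesOfIdeal F S k (I.map h) =
      (LieAlgebra.derivedSeriesOfIdeal F L k I).map h := by
    intro k
    induction k with
    | zero => simp
    | succ k ih =>
      rw [LieAlgebra.derivedSeriesOfIdeal_succ, LieAlgebra.derivedSeriesOfIdeal_succ, ih,
        LieIdeal.map_bracket_eq _ hs]
  have h2 : LieAlgebra.IsSolvable (I.map h) := by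
    apply LieAlgebra.IsSolvable.mk (R := F) (k := k)
    rw [LieIdeal.derivedSeries_eq_bot_iff, key, hk]
    simp
  have h3 := LieAlgebra.HasTrivialRadical.eq_bot_of_isSolvable (I.map h)
  have : h x ∈ I.map h := LieIdeal.mem_map hx
  rw [h3] at this
  simpa using this

theorem semis {F Q : Type*} [Field F] [CharZero F] [LieRing Q] [LieAlgebra F Q]
    [FiniteDimensional F Q] (hT : LieAlgebra.HasTrivialRadical F Q) (hQ : IsPluperfect F Q) :
    ∃ (m : ℕ) (J : Fin m → LieIdeal F Q),
          DirectSum.IsInternal (fun i => (J i).toSubmodule) ∧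
          ∀ i, LieAlgebra.IsSimple F (J i) ∧ IsPluperfect F (J i) := by
  have hss : LieAlgebra.IsSemisimple F Q := inferInstance
  have hind := hss.sSupIndep_isAtom
  have htop := hss.sSup_atoms_eq_top
  have hfin : {I : LieIdeal F Q | IsAtom I}.Finite :=
    WellFoundedGT.finite_of_sSupIndep hind
  have : Finite {I : LieIdeal F Q | IsAtom I} := hfin
  let e := Finite.equivFin {I : LieIdeal F Q | IsAtom I}
  let J : Fin (Nat.card {I : LieIdeal F Q | IsAtom I}) → LieIdeal F Q := fun i => (e.symm i).1
  have hJ : ∀ i, IsAtom (J i) := fun i => (e.symm i).2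
  refine ⟨_, J, ?_, fun i => ⟨LieAlgebra.IsSemisimple.isSimple_of_isAtom (J i) (hJ i), ?_⟩⟩
  · apply DirectSum.isInternal_submodule_of_iSupIndep_of_iSup_eq_top
    · apply LieSubmodule.iSupIndep_toSubmodule.2
      exact ((sSupIndep_iff _).1 hind).comp e.symm.injective
    · apply LieSubmodule.iSup_toSubmodule_eq_top.2
      rw [← htop, sSup_eq_iSup']
      exact e.symm.iSup_comp (g := fun I : {I : LieIdeal F Q | IsAtom I} => (I : LieIdeal F Q))
  · let K := (J i).killingCompl
    have hc : IsCompl (J i) K := LieIdeal.isCompl_killingCompl (J i)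
    let g : (J i) →ₗ⁅F⁆ (Q ⧸ K) := (qmk K).comp (J i).incl
    have hg : Function.Bijective g := by
      constructor
      · rw [injective_iff_map_eq_zero]
        intro x hx
        have hx' : (x : Q) ∈ K := (qmk_eq_zero K _).1 hx
        have : (x : Q) ∈ J i ⊓ K := ⟨x.2, hx'⟩
        rw [hc.inf_eq_bot] at this
        exact Subtype.ext (by simpa using this)
      · intro b
        obtain ⟨a, rfl⟩ := qmk_surj K b
        have : a ∈ J i ⊔ K := by rw [hc.sup_eq_top]; trivial
        obtain ⟨y, hy, z, hz, rfl⟩ := (LieSubmodule.mem_sup _ _ _).1 this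
        refine ⟨⟨y, hy⟩, ?_⟩
        rw [map_add, (qmk_eq_zero K z).2 hz, add_zero]
        rfl
    let E := LieEquiv.ofBijective g hg
    exact pluperfect_surj (E.symm : (Q ⧸ K) →ₗ⁅F⁆ (J i)) E.symm.surjective
      (pluperfect_surj (qmk K) (qmk_surj K) hQ)

theorem fwd {F L : Type*} [Field F] [CharZero F] [LieRing L] [LieAlgebra F L]
    [FiniteDimensional F L] (hL : IsPluperfect F L) :
      (⁅(⊤ : LieIdeal F L), (⊤ : LieIdeal F L)⁆ = ⊤ ∧
        ∃ (m : ℕ) (J : Fin m → LieIdeal F (L ⧸ LieAlgebra.radical F L)),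
          DirectSum.IsInternal (fun i => (J i).toSubmodule) ∧
          ∀ i, LieAlgebra.IsSimple F (J i) ∧ IsPluperfect F (J i)) := by
  constructor
  · apply hL
    intro x p hp
    obtain ⟨q, hq⟩ := Submodule.exists_isCompl p
    refine ⟨q, ?_, hq⟩
    intro y hy
    obtain ⟨x, rfl⟩ := qmk_surj _ x
    obtain ⟨y, rfl⟩ := qmk_surj _ y
    have : ⁅qmk ⁅(⊤ : LieIdeal F L), (⊤ : LieIdeal F L)⁆ x, qmk ⁅(⊤ : LieIdeal F L), (⊤ : LieIdeal F L)⁆ y⁆ = 0 := by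
      rw [← LieHom.map_lie, qmk_eq_zero]
      exact LieSubmodule.lie_mem_lie (I := (⊤ : LieIdeal F L)) (N := (⊤ : LieIdeal F L)) trivial trivial
    rw [this]
    exact q.zero_mem
  · have hT := trivRad_quot F L
    have hQ : IsPluperfect F (L ⧸ LieAlgebra.radical F L) :=
      pluperfect_surj (qmk _) (qmk_surj _) hL
    have hfd : FiniteDimensional F (L ⧸ LieAlgebra.radical F L) :=
      Module.Finite.of_surjective (qmk (LieAlgebra.radical F L) : L →ₗ[F] _) (qmk_surj _)
    exact semis hT hQ

theorem bwd {F L : Type*} [Field F] [LieRing L] [LieAlgebra F L]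
    [FiniteDimensional F L] (hp : ⁅(⊤ : LieIdeal F L), (⊤ : LieIdeal F L)⁆ = ⊤)
    (m : ℕ) (J : Fin m → LieIdeal F (L ⧸ LieAlgebra.radical F L))
    (hJ : DirectSum.IsInternal (fun i => (J i).toSubmodule))
    (hpl : ∀ i, IsPluperfect F (J i)) : IsPluperfect F L := by
  intro I hI
  let Z := LieAlgebra.center F (L ⧸ I)
  let h : L →ₗ⁅F⁆ ((L ⧸ I) ⧸ Z) := (qmk Z).comp (qmk I)
  have hs : Function.Surjective h := (qmk_surj Z).comp (qmk_surj I)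
  have hST : IsToral F ((L ⧸ I) ⧸ Z) := toral_of_surj (qmk Z) (qmk_surj Z) hI
  have hTp : ∀ (p : Submodule F (L ⧸ I)), (∀ a b : L ⧸ I, ⁅a, b⁆ ∈ p) → ∀ x, x ∈ p := by
    intro p hab x
    obtain ⟨x, rfl⟩ := qmk_surj I x
    refine perfect_span hp (p.comap (qmk I : L →ₗ[F] (L ⧸ I))) ?_ x
    intro a b
    have := hab (qmk I a) (qmk I b)
    rw [← LieHom.map_lie] at this
    exact this
  have hrad : LieAlgebra.HasTrivialRadical F ((L ⧸ I) ⧸ Z) := by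
    rw [LieAlgebra.hasTrivialRadical_iff_no_abelian_ideals]
    intro A hA
    rw [eq_bot_iff]
    intro s hsA
    have hc := abelian_ideal_central hST A hA s hsA
    obtain ⟨t, rfl⟩ := qmk_surj Z s
    have ht : ∀ x y : L ⧸ I, ⁅x, ⁅t, y⁆⁆ = 0 := by
      intro x y
      have h1 := hc (qmk Z y)
      rw [← LieHom.map_lie, qmk_eq_zero] at h1
      exact h1 x
    have : t ∈ Z := by
      intro x
      let p : Submodule F (L ⧸ I) :=
        { carrier := {y | ⁅y, t⁆ = 0}
          add_mem' := by intro u v hu hv; simp_all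
          zero_mem' := by simp
          smul_mem' := by intro c u hu; simp_all }
      refine hTp p ?_ x
      intro a b
      show ⁅⁅a, b⁆, t⁆ = 0
      rw [lie_lie, ← lie_skew b t, ← lie_skew a t, lie_neg, lie_neg, ht, ht]
      simp
    simpa using (qmk_eq_zero Z t).2 this
  have hk : ∀ x ∈ LieAlgebra.radical F L, h x = 0 := fun x hx =>
    map_solvable_zero h hs hrad (LieAlgebra.radical F L) x hx
  let gl : (L ⧸ LieAlgebra.radical F L) →ₗ[F] ((L ⧸ I) ⧸ Z) :=
    Submodule.liftQ (LieAlgebra.radical F L).toSubmodule (h : L →ₗ[F] ((L ⧸ I) ⧸ Z))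
      (fun x hx => LinearMap.mem_ker.2 (hk x hx))
  have hgl : ∀ x, gl (qmk _ x) = h x := fun x => rfl
  let g : (L ⧸ LieAlgebra.radical F L) →ₗ⁅F⁆ ((L ⧸ I) ⧸ Z) :=
    { gl with
      map_lie' := by
        intro x y
        obtain ⟨x, rfl⟩ := qmk_surj _ x
        obtain ⟨y, rfl⟩ := qmk_surj _ y
        show gl _ = ⁅gl _, gl _⁆
        rw [← LieHom.map_lie, hgl, hgl, hgl, LieHom.map_lie] }
  have hg0 : ∀ x, g x = 0 := by
    intro x
    have hx : x ∈ ⨆ i, (J i).toSubmodule := by rw [hJ.submodule_iSup_eq_top]; trivial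
    have hle : ⨆ i, (J i).toSubmodule ≤ LinearMap.ker gl := by
      refine iSup_le fun i y hy => ?_
      exact pluperfect_hom (hpl i) hST (g.comp (J i).incl) ⟨y, hy⟩
    exact hle hx
  have hZ : ∀ t : L ⧸ I, t ∈ Z := by
    intro t
    obtain ⟨x, rfl⟩ := qmk_surj I t
    exact (qmk_eq_zero Z _).1 (hg0 (qmk _ x))
  rw [eq_top_iff]
  intro x _
  rw [← qmk_eq_zero]
  have := hTp ⊥ (fun a b => by simpa using hZ b a) (qmk I x)
  simpa using this

/-- A nontrivial finite-dimensional Lie algebra over a field of characteristic zero is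
pluperfect iff it is perfect and the quotient by its radical is a finite (possibly empty)
internal direct sum of Lie ideals, each of which is a simple and pluperfect Lie algebra. -/
theorem stmt_4 (F L : Type*) [Field F] [CharZero F] [LieRing L] [LieAlgebra F L]
    [FiniteDimensional F L] [Nontrivial L] :
    IsPluperfect F L ↔
      (⁅(⊤ : LieIdeal F L), (⊤ : LieIdeal F L)⁆ = ⊤ ∧
        ∃ (m : ℕ) (J : Fin m → LieIdeal F (L ⧸ LieAlgebra.radical F L)),
          DirectSum.IsInternal (fun i => (J i).toSubmodule) ∧
          ∀ i, LieAlgebra.IsSimple F (J i) ∧ IsPluperfect F (J i)) := by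
  constructor
  · exact fwd
  · rintro ⟨hp, m, J, hJ, hJ'⟩
    exact bwd hp m J hJ fun i => (hJ' i).2
end

section
/- Let F be a field of characteristic 0 and L a finite-dimensional Lie algebra over F. If x, y ∈ L and λ ∈ F with λ ≠ 0 satisfy ⁅x, y⁆ = λ • y, then the adjoint endomorphism ad y : L → L is nilpotent. In particular, every inertial element of L is ad-nilpotent. -/
set_option autoImplicit false

/-- A nonzero element `y` of a Lie algebra `L` over `F` is *inertial* if there are
`x ∈ L` and a nonzero scalar `c ∈ F` with `⁅x, y⁆ = c • y`. -/
def IsInertial (F : Type*) {L : Type*} [Field F] [LieRing L] [LieAlgebra F L] (y : L) :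
    Prop :=
  y ≠ 0 ∧ ∃ (x : L) (c : F), c ≠ 0 ∧ ⁅x, y⁆ = c • y

/-- Over a field of characteristic zero, if `⁅x, y⁆ = λ • y` with `λ ≠ 0` in a
finite-dimensional Lie algebra, then `ad y` is nilpotent; in particular every inertial
element is ad-nilpotent. -/
theorem stmt_7 (F L : Type*) [Field F] [CharZero F] [LieRing L] [LieAlgebra F L]
    [FiniteDimensional F L] :
    (∀ (x y : L) (lam : F), lam ≠ 0 → ⁅x, y⁆ = lam • y →
      IsNilpotent (LieAlgebra.ad F L y)) ∧
    (∀ y : L, IsInertial F y → IsNilpotent (LieAlgebra.ad F L y)) := by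
  have key : ∀ (x y : L) (lam : F), lam ≠ 0 → ⁅x, y⁆ = lam • y →
      IsNilpotent (LieAlgebra.ad F L y) := by
    intro x y lam hlam hxy
    by_contra hn
    set X := LieAlgebra.ad F L x with hX
    set Y := LieAlgebra.ad F L y with hY
    have h1 : X * Y - Y * X = lam • Y := by
      ext z
      have h := lie_lie x y z
      rw [hxy, smul_lie] at h
      simpa [hX, hY] using h.symm
    have h2 : ∀ n : ℕ, X * Y ^ n - Y ^ n * X = ((n : F) * lam) • Y ^ n := by
      intro n
      induction n with
      | zero => simp
      | succ k ih =>
        have e : X * Y ^ (k + 1) - Y ^ (k + 1) * X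
            = (X * Y ^ k - Y ^ k * X) * Y + Y ^ k * (X * Y - Y * X) := by
          rw [pow_succ]; noncomm_ring
        rw [e, ih, h1, smul_mul_assoc, mul_smul_comm, ← pow_succ, ← add_smul]
        congr 1
        push_cast
        ring
    let T : Module.End F (Module.End F L) := LinearMap.mulLeft F X - LinearMap.mulRight F X
    have h3 : ∀ n : ℕ, T.HasEigenvalue ((n : F) * lam) := by
      intro n
      refine Module.End.hasEigenvalue_of_hasEigenvector (x := Y ^ n)
        ⟨Module.End.mem_eigenspace_iff.mpr (h2 n), fun h0 => hn ⟨n, h0⟩⟩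
    have hfin := Module.End.finite_hasEigenvalue T
    have hinj : Function.Injective (fun n : ℕ => (n : F) * lam) := by
      intro a b hab
      exact Nat.cast_injective (mul_right_cancel₀ hlam hab)
    exact Set.infinite_of_injective_forall_mem hinj h3 hfin
  refine ⟨key, ?_⟩
  rintro y ⟨-, x, c, hc, h⟩
  exact key x y c hc h
end

section
/- Let F be a field of characteristic 0 and L a finite-dimensional Lie algebra over F that is spanned as an F-vector space by elements z for which ad z is nilpotent. Then the F-linear span I of the set of inertial elements of L is a Lie ideal of L; that is, ⁅z, w⁆ ∈ I for every z ∈ L and every w ∈ I. -/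
set_option autoImplicit false

theorem exp_inertial (F L : Type*) [Field F] [CharZero F] [LieRing L] [LieAlgebra F L]
    (z : L) (n : ℕ) (hz : (LieAlgebra.ad F L z) ^ n = 0) (y : L) (hy : IsInertial F y) :
    IsInertial F (∑ i ∈ Finset.range n,
      (i.factorial : F)⁻¹ • ((LieAlgebra.ad F L z) ^ i) y) := by
  let : Module ℚ L := Module.compHom L (algebraMap ℚ F)
  let : LieAlgebra ℚ L :=
    { lie_smul := fun t x m => lie_smul (algebraMap ℚ F t) x m }
  have hD : (LieDerivation.ad F L z).toLinearMap = LieAlgebra.ad F L z := by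
    ext w; simp
  have hnil : IsNilpotent (LieDerivation.ad F L z).toLinearMap := ⟨n, by rw [hD, hz]⟩
  have key : LieDerivation.exp (LieDerivation.ad F L z) hnil y = ∑ i ∈ Finset.range n,
      (i.factorial : F)⁻¹ • ((LieAlgebra.ad F L z) ^ i) y := by
    rw [LieDerivation.exp_map_apply, hD, IsNilpotent.exp_eq_sum hz, LinearMap.sum_apply]
    refine Finset.sum_congr rfl fun i _ => ?_
    rw [LinearMap.smul_apply]
    have hq : ∀ (q : ℚ) (v : L), q • v = (q : F) • v := fun q v => rfl
    rw [hq]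
    simp
  rw [← key]
  obtain ⟨h0, x, c, hc, h⟩ := hy
  refine ⟨fun h' => h0 ((LieDerivation.exp _ hnil).injective (h'.trans (map_zero (LieDerivation.exp _ hnil).toLieHom).symm)),
    LieDerivation.exp _ hnil x, c, hc, ?_⟩
  rw [← LieEquiv.map_lie, h, map_smul]

theorem ad_nil_mem (F L : Type*) [Field F] [CharZero F] [LieRing L] [LieAlgebra F L]
    (z : L) (hz : IsNilpotent (LieAlgebra.ad F L z)) (y : L) (hy : IsInertial F y) :
    ⁅z, y⁆ ∈ Submodule.span F {y : L | IsInertial F y} := by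
  obtain ⟨n, hn⟩ := hz
  have hn2 : (LieAlgebra.ad F L z) ^ (n + 2) = 0 := by rw [pow_add, hn, zero_mul]
  rw [← Submodule.Quotient.mk_eq_zero, ← Module.forall_dual_apply_eq_zero_iff F]
  intro f
  let g : L →ₗ[F] F := f ∘ₗ (Submodule.mkQ _)
  let p : Polynomial F := ∑ i ∈ Finset.range (n + 2),
    Polynomial.monomial i ((i.factorial : F)⁻¹ * g (((LieAlgebra.ad F L z) ^ i) y))
  have hp : p = 0 := by
    apply Polynomial.zero_of_eval_zero
    intro t
    have h1 := exp_inertial F L (t • z) (n + 2)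
      (by rw [map_smul, smul_pow, hn2, smul_zero]) y hy
    have h2 : g (∑ i ∈ Finset.range (n + 2),
      (i.factorial : F)⁻¹ • ((LieAlgebra.ad F L (t • z)) ^ i) y) = 0 := by
      have h5 := (Submodule.Quotient.mk_eq_zero
        (Submodule.span F {y : L | IsInertial F y})).2 (Submodule.subset_span h1)
      exact (congrArg f h5).trans (map_zero f)
    rw [← h2, map_sum, Polynomial.eval_finsetSum]
    refine Finset.sum_congr rfl fun i _ => ?_
    rw [map_smul, map_smul, smul_pow, LinearMap.smul_apply, map_smul, Polynomial.eval_monomial,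
      smul_eq_mul, smul_eq_mul]
    ring
  have h3 : p.coeff 1 = g ⁅z, y⁆ := by
    simp [p, Polynomial.coeff_monomial]
  have h4 : g ⁅z, y⁆ = 0 := by rw [← h3, hp, Polynomial.coeff_zero]
  exact h4

/-- Over a field of characteristic zero, if a finite-dimensional Lie algebra `L` is
spanned by elements `z` with `ad z` nilpotent, then the span of the inertial elements of
`L` is a Lie ideal: it is stable under bracketing with arbitrary elements of `L`. -/
theorem stmt_8 (F L : Type*) [Field F] [CharZero F] [LieRing L] [LieAlgebra F L]
    [FiniteDimensional F L]
    (hspan : Submodule.span F {z : L | IsNilpotent (LieAlgebra.ad F L z)} = ⊤) :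
    ∀ z : L, ∀ w ∈ Submodule.span F {y : L | IsInertial F y},
      ⁅z, w⁆ ∈ Submodule.span F {y : L | IsInertial F y} := by
  intro z w hw
  have hz : z ∈ Submodule.span F {z : L | IsNilpotent (LieAlgebra.ad F L z)} := by
    rw [hspan]; trivial
  induction hz using Submodule.span_induction with
  | zero => rw [zero_lie]; exact Submodule.zero_mem _
  | add a b _ _ ha hb => rw [add_lie]; exact Submodule.add_mem _ ha hb
  | smul c a _ ha => rw [smul_lie]; exact Submodule.smul_mem _ c ha
  | mem z hz =>
    induction hw using Submodule.span_induction with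
    | zero => rw [lie_zero]; exact Submodule.zero_mem _
    | add a b _ _ ha hb => rw [lie_add]; exact Submodule.add_mem _ ha hb
    | smul c a _ ha => rw [lie_smul]; exact Submodule.smul_mem _ c ha
    | mem y hy => exact ad_nil_mem F L z hz y hy
end

section
/- Let F be a field of characteristic 0, n a positive integer, and L a Lie subalgebra of sl_n(F) (the Lie algebra of n×n matrices over F of trace zero, with the commutator bracket) that is simple as a Lie algebra. If there exists x ∈ L such that the adjoint endomorphism ad x : L → L has a nonzero eigenvalue in F, then L is inertially generated. -/
/-- A Lie algebra is *inertially generated* if it admits an `F`-basis all of whose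
elements are inertial. -/
def InertiallyGenerated (F L : Type*) [Field F] [LieRing L] [LieAlgebra F L] : Prop :=
  ∃ (n : ℕ) (b : Module.Basis (Fin n) F L), ∀ i, IsInertial F (b i)

attribute [local instance 100] LieRing.ofAssociativeRing

section assoc
variable {F V : Type*} [Field F] [CharZero F] [AddCommGroup V] [Module F V] [FiniteDimensional F V]

lemma aux_nilp_of_eigen (X A : Module.End F V) (c : F) (hc : c ≠ 0)
    (h : X * A - A * X = c • A) : IsNilpotent A := by
  by_contra hA
  have hA' : ∀ k : ℕ, A ^ k ≠ 0 := fun k hk => hA ⟨k, hk⟩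
  let T : Module.End F (Module.End F V) := LinearMap.mulLeft F X - LinearMap.mulRight F X
  have hT : ∀ k : ℕ, T (A ^ k) = ((k : F) * c) • A ^ k := by
    intro k
    simp only [T, LinearMap.sub_apply, LinearMap.mulLeft_apply, LinearMap.mulRight_apply]
    induction k with
    | zero => simp
    | succ k ih =>
      have : X * A ^ (k+1) - A ^ (k+1) * X
          = (X * A ^ k - A ^ k * X) * A + A ^ k * (X * A - A * X) := by
        rw [pow_succ]; noncomm_ring
      rw [this, ih, h]
      simp only [smul_mul_assoc, mul_smul_comm, ← pow_succ, ← add_smul]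
      congr 1; push_cast; ring
  have hinj : Function.Injective (fun k : ℕ => (k : F) * c) := by
    intro a b hab
    have := mul_right_cancel₀ hc hab
    exact_mod_cast this
  have hli := Module.End.eigenvectors_linearIndependent' T (fun k : ℕ => (k : F) * c) hinj
    (fun k => A ^ k) (fun k => ⟨Module.End.mem_eigenspace_iff.2 (hT k), hA' k⟩)
  have := hli.finite
  exact not_finite ℕ

lemma aux_W_nilp (A B W : Module.End F V) (hW : A * B - B * A = W) (hAW : A * W = W * A)
    (hA : IsNilpotent A) : IsNilpotent W := by
  let δ : Module.End F (Module.End F V) := LinearMap.mulLeft F A - LinearMap.mulRight F A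
  have hδ : ∀ C, δ C = A * C - C * A := fun C => rfl
  have hδn : IsNilpotent δ := by
    apply Commute.isNilpotent_sub
    · exact LinearMap.ext fun C => (mul_assoc A C A).symm
    · obtain ⟨n, hn⟩ := hA
      exact ⟨n, by rw [LinearMap.pow_mulLeft, hn]; simp⟩
    · obtain ⟨n, hn⟩ := hA
      exact ⟨n, by rw [LinearMap.pow_mulRight, hn]; simp⟩
  have h1 : ∀ (m : ℕ) (C : Module.End F V),
      (δ ^ (m+1)) (B * C) = B * (δ ^ (m+1)) C + ((m+1 : ℕ) : F) • (W * (δ ^ m) C) := by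
    intro m C
    induction m with
    | zero => 
      simp [hδ, ← hW]; noncomm_ring
    | succ m ih =>
      rw [pow_succ', Module.End.mul_apply, ih, map_add, map_smul]
      have e1 : ∀ C, δ (B * C) = B * δ C + W * C := by
        intro C; simp only [hδ, ← hW]; noncomm_ring
      have e2 : ∀ C, δ (W * C) = W * δ C := by
        intro C; simp only [hδ]; rw [← mul_assoc, hAW]; noncomm_ring
      rw [e1, e2, ← Module.End.mul_apply δ, ← Module.End.mul_apply δ, ← pow_succ', ← pow_succ']
      push_cast
      module
  have h2 : ∀ n : ℕ, (δ ^ n) (B ^ n) = (n.factorial : F) • W ^ n := by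
    intro n
    induction n with
    | zero => simp
    | succ n ih =>
      have e3 : ∀ n : ℕ, δ (W ^ n) = 0 := by
        intro n
        have : Commute A W := hAW
        rw [hδ, (this.pow_right n).eq, sub_self]
      rw [pow_succ' B, h1, ih, pow_succ' δ, Module.End.mul_apply, ih, map_smul, e3]
      simp only [smul_zero, mul_zero, zero_add, mul_smul_comm, smul_smul, ← pow_succ']
      rw [Nat.factorial_succ]; push_cast; rfl
  obtain ⟨n, hn⟩ := hδn
  refine ⟨n, ?_⟩
  have := h2 n
  rw [hn] at this
  have hf : (n.factorial : F) ≠ 0 := by exact_mod_cast n.factorial_ne_zero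
  simpa [hf] using this.symm

lemma aux_trace_zero (A B W : Module.End F V) (hW : A * B - B * A = W) (hAW : A * W = W * A)
    (hA : IsNilpotent A) : LinearMap.trace F V (A * B) = 0 := by
  obtain ⟨m, hm⟩ := aux_W_nilp A B W hW hAW hA
  have hAB : ∀ i : ℕ, A ^ (i+1) * B = B * A ^ (i+1) + ((i+1 : ℕ) : F) • (W * A ^ i) := by
    intro i
    induction i with
    | zero => simp [← hW]
    | succ i ih =>
      have hc : A * B = B * A + W := by rw [← hW]; abel
      rw [pow_succ' A (i+1), mul_assoc, ih, mul_add, ← mul_assoc, hc, mul_smul_comm,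
        ← mul_assoc A W, hAW, mul_assoc W A, ← pow_succ', add_mul, mul_assoc B]
      push_cast
      module
  -- (AB)^k on ker A^(i+1)
  have key : ∀ (i k : ℕ) (v : V), (A ^ (i+1)) v = 0 →
      (A ^ (i+1)) (((A * B) ^ k) v) = 0 ∧
      (A ^ i) (((A * B) ^ k) v) = ((i+1 : ℕ) : F) ^ k • (W ^ k) ((A ^ i) v) := by
    intro i k v hv
    induction k with
    | zero => simp [hv]
    | succ k ih =>
      obtain ⟨ih1, ih2⟩ := ih
      set u := ((A * B) ^ k) v with hu
      have e : ((A * B) ^ (k+1)) v = A (B u) := by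
        rw [pow_succ']; rfl
      have e2 : (A ^ i) (A (B u)) = ((i+1 : ℕ) : F) • W ((A ^ i) u) := by
        have := congrArg (fun T : Module.End F V => T u) (hAB i)
        simp only [Module.End.mul_apply, LinearMap.add_apply, LinearMap.smul_apply, ih1,
          map_zero, zero_add] at this
        rw [← this, pow_succ, Module.End.mul_apply]
      have hcW : Commute A W := hAW
      refine ⟨?_, ?_⟩
      · rw [e, pow_succ', Module.End.mul_apply, e2, map_smul, ← Module.End.mul_apply A W, hAW,
          Module.End.mul_apply, ← Module.End.mul_apply A, ← pow_succ', ih1]; simp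
      · rw [e, e2, ih2, map_smul, smul_smul, ← pow_succ', pow_succ' W, Module.End.mul_apply]
  have nil : ∀ (i : ℕ) (v : V), (A ^ i) v = 0 → ((A * B) ^ (m * i)) v = 0 := by
    intro i
    induction i with
    | zero => intro v hv; simpa using hv
    | succ i ih =>
      intro v hv
      have := (key i m v hv).2
      rw [hm] at this
      have := ih _ (by simpa using this)
      rw [← Module.End.mul_apply, ← pow_add] at this
      exact this
  have : IsNilpotent (A * B) := by
    obtain ⟨n, hn⟩ := hA
    exact ⟨m * n, LinearMap.ext fun v => nil n v (by simp [hn])⟩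
  exact (LinearMap.isNilpotent_trace_of_isNilpotent this).eq_zero

inductive AuxGood (H : Module.End F V) : V → Prop
  | zero : AuxGood H 0
  | step (a : F) (v : V) : AuxGood H (H v - a • v) → AuxGood H v

lemma aux_good_mem (H : Module.End F V) (v : V) (h : AuxGood H v) :
    v ∈ ⨆ μ, H.maxGenEigenspace μ := by
  induction h with
  | zero => exact zero_mem _
  | step a v _ ih =>
    set U := ⨆ μ, H.maxGenEigenspace μ with hU
    have hle : ∀ μ, H.maxGenEigenspace μ ≤ U := fun μ => le_iSup (fun μ => H.maxGenEigenspace μ) μ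
    have claim : ∀ w ∈ U, ∃ u ∈ U, H u - a • u - w ∈ H.maxGenEigenspace a := by
      intro w hw
      induction hw using Submodule.iSup_induction' with
      | mem μ w hw =>
        by_cases hμ : μ = a
        · subst hμ
          exact ⟨0, zero_mem _, by simpa using hw⟩
        · rw [Module.End.mem_maxGenEigenspace] at hw
          obtain ⟨k, hk⟩ := hw
          induction k generalizing w with
          | zero => exact ⟨0, zero_mem _, by have : w = 0 := by simpa using hk
                                             simp [this]⟩
          | succ k ih2 =>
            have hwU : w ∈ U := hle μ (by rw [Module.End.mem_maxGenEigenspace]; exact ⟨_, hk⟩)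
            obtain ⟨u', hu', h'⟩ := ih2 (H w - μ • w) (by
              rw [pow_succ] at hk; simpa using hk)
            have hne : μ - a ≠ 0 := sub_ne_zero.2 hμ
            refine ⟨(μ - a)⁻¹ • (w - u'), U.smul_mem _ (U.sub_mem hwU hu'), ?_⟩
            have : H ((μ - a)⁻¹ • (w - u')) - a • ((μ - a)⁻¹ • (w - u')) - w
              = (-(μ - a)⁻¹) • (H u' - a • u' - (H w - μ • w)) := by
              rw [map_smul, map_sub]
              have : w = (μ - a)⁻¹ • ((μ - a) • w) := by rw [smul_smul, inv_mul_cancel₀ hne, one_smul]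
              nth_rewrite 3 [this]
              module
            rw [this]
            exact Submodule.smul_mem _ _ h'
      | zero => exact ⟨0, zero_mem _, by simp⟩
      | add x y _ _ hx hy =>
        obtain ⟨u, hu, h1⟩ := hx
        obtain ⟨u', hu', h2⟩ := hy
        refine ⟨u + u', add_mem hu hu', ?_⟩
        have := add_mem h1 h2
        convert this using 1
        rw [map_add]; module
    obtain ⟨u, hu, h1⟩ := claim _ ih
    have : u - v ∈ H.maxGenEigenspace a := by
      have e : H u - a • u - (H v - a • v) = (H - a • 1) (u - v) := by
        simp; module
      rw [e, Module.End.mem_maxGenEigenspace] at h1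
      obtain ⟨k, hk⟩ := h1
      rw [Module.End.mem_maxGenEigenspace]
      exact ⟨k+1, by rw [pow_succ]; exact hk⟩
    have := U.sub_mem hu (hle _ this)
    simpa using this

lemma aux_split (A B H : Module.End F V) (hH : A * B - B * A = H) (hHA : H * A - A * H = (2:F) • A)
    (hA : IsNilpotent A) : ⨆ μ, H.maxGenEigenspace μ = ⊤ := by
  have hc : A * B = B * A + H := by rw [← hH]; abel
  have hd : A * H = H * A - (2:F) • A := by rw [← hHA]; abel
  have hAH : ∀ i : ℕ, A ^ i * H = H * A ^ i - (2 * (i:F)) • A ^ i := by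
    intro i
    induction i with
    | zero => simp
    | succ i ih =>
      rw [pow_succ' A i, mul_assoc, ih, mul_sub, ← mul_assoc, hd, sub_mul, mul_smul_comm,
        smul_mul_assoc, mul_assoc]
      push_cast
      module
  have hAB : ∀ i : ℕ, A ^ (i+1) * B
      = B * A ^ (i+1) + ((i+1 : ℕ) : F) • (H * A ^ i - (i : F) • A ^ i) := by
    intro i
    induction i with
    | zero => simp [← hH]
    | succ i ih =>
      rw [pow_succ' A (i+1), mul_assoc, ih, mul_add, ← mul_assoc A B, hc, mul_smul_comm, mul_sub,
        ← mul_assoc A H, hd, add_mul, mul_assoc B, mul_smul_comm, sub_mul, mul_assoc H,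
        smul_mul_assoc, ← pow_succ' A i]
      push_cast
      module
  obtain ⟨N, hN⟩ := hA
  -- kernel of A
  have k1 : ∀ (d j : ℕ), j + d = N → ∀ w : V, A ((A ^ j) w) = 0 → AuxGood H ((A ^ j) w) := by
    intro d
    induction d with
    | zero =>
      intro j hj w _
      simp at hj
      subst hj
      rw [hN]; exact .zero
    | succ d ih =>
      intro j hj w hw
      apply AuxGood.step (j : F)
      have e := congrArg (fun T : Module.End F V => T w) (hAB j)
      simp only [Module.End.mul_apply, LinearMap.add_apply, LinearMap.smul_apply,
        LinearMap.sub_apply] at e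
      rw [show (A ^ (j+1)) w = 0 by rw [pow_succ']; exact hw, map_zero, zero_add] at e
      have hne : ((j+1 : ℕ) : F) ≠ 0 := by exact_mod_cast Nat.succ_ne_zero j
      have e' : H ((A ^ j) w) - (j:F) • (A ^ j) w = (A ^ (j+1)) ((((j+1 : ℕ) : F))⁻¹ • B w) := by
        rw [map_smul, e, smul_smul, inv_mul_cancel₀ hne, one_smul]
      rw [e']
      apply ih (j+1) (by omega)
      rw [← e', map_sub, map_smul, hw, smul_zero, sub_zero, ← Module.End.mul_apply, hd]
      simp [hw]
  have k2 : ∀ (i : ℕ) (v : V), (A ^ i) v = 0 → AuxGood H v := by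
    intro i
    induction i with
    | zero => intro v hv; have : v = 0 := by simpa using hv
              rw [this]; exact .zero
    | succ i ih =>
      intro v hv
      have g : AuxGood H ((A ^ i) v) := by
        by_cases hi : i ≤ N
        · exact k1 (N - i) i (by omega) v (by rw [pow_succ'] at hv; exact hv)
        · rw [pow_eq_zero_of_le (by omega : N ≤ i) hN]; exact .zero
      have gen : ∀ u, AuxGood H u → ∀ v, u = (A ^ i) v → AuxGood H v := by
        intro u hu
        induction hu with
        | zero => intro v hv; exact ih v hv.symm
        | step a u _ ihu =>
          intro v hv
          apply AuxGood.step (a - 2 * (i:F))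
          apply ihu
          have e := congrArg (fun T : Module.End F V => T v) (hAH i)
          simp only [Module.End.mul_apply, LinearMap.smul_apply, LinearMap.sub_apply] at e
          rw [map_sub, map_smul, e, hv]
          module
      exact gen _ g v rfl
  rw [eq_top_iff]
  intro v _
  exact aux_good_mem H v (k2 N v (by simp [hN]))
end assoc
section lie
variable {F L : Type*} [Field F] [CharZero F] [LieRing L] [LieAlgebra F L] [FiniteDimensional F L]

lemma aux_ad_comm (x y : L) : LieAlgebra.ad F L x * LieAlgebra.ad F L y
    - LieAlgebra.ad F L y * LieAlgebra.ad F L x = LieAlgebra.ad F L ⁅x, y⁆ := by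
  ext z
  simp

lemma aux_ad_nilp (x y : L) (c : F) (hc : c ≠ 0) (h : ⁅x, y⁆ = c • y) :
    IsNilpotent (LieAlgebra.ad F L y) := by
  apply aux_nilp_of_eigen (LieAlgebra.ad F L x) _ c hc
  rw [aux_ad_comm, h, map_smul]

lemma aux_exists_h [LieAlgebra.IsKilling F L] (y : L) (hy : IsNilpotent (LieAlgebra.ad F L y)) :
    ∃ z : L, ⁅⁅y, z⁆, y⁆ = (2:F) • y := by
  let κ := killingForm F L
  let T : Module.End F L := LieAlgebra.ad F L y * LieAlgebra.ad F L y
  have hT : ∀ z, T z = ⁅y, ⁅y, z⁆⁆ := fun z => rfl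
  have hnd : LinearMap.BilinForm.Nondegenerate κ := LieAlgebra.IsKilling.killingForm_nondegenerate F L
  have hrefl : LinearMap.BilinForm.IsRefl κ := (LieModule.traceForm_isSymm F L L).isRefl
  have hinv : ∀ a b c : L, κ ⁅a, b⁆ c = κ a ⁅b, c⁆ := LieModule.traceForm_apply_lie_apply F L L
  have hmem : y ∈ LinearMap.range T := by
    rw [← LinearMap.BilinForm.orthogonal_orthogonal hnd hrefl (LinearMap.range T)]
    rw [LinearMap.BilinForm.mem_orthogonal_iff]
    intro z hz
    rw [LinearMap.BilinForm.mem_orthogonal_iff] at hz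
    have hTz : T z = 0 := by
      have : ∀ w, κ (T z) w = 0 := by
        intro w
        have h1 := hz (T w) ⟨w, rfl⟩
        change κ (T w) z = 0 at h1
        have h2 : κ (T z) w = κ (T w) z := by
          have hinv' : ∀ a b c : L, κ ⁅a, b⁆ c = -κ b ⁅a, c⁆ := by
            intro a b c
            rw [← lie_skew, map_neg, LinearMap.neg_apply, hinv]
          have h3 : κ (T w) z = κ z (T w) := LieModule.traceForm_comm F L L _ _
          rw [h3, hT, hT, hinv', hinv', neg_neg]
        rw [h2, h1]
      exact hnd.1 _ this
    change κ z y = 0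
    rw [show κ z y = κ y z from LieModule.traceForm_comm F L L _ _]
    change LinearMap.trace F L (LieAlgebra.ad F L y * LieAlgebra.ad F L z) = 0
    apply aux_trace_zero _ _ (LieAlgebra.ad F L ⁅y, z⁆) (aux_ad_comm y z) _ hy
    rw [← sub_eq_zero, aux_ad_comm, ← hT, hTz, map_zero]
  obtain ⟨z, hz⟩ := hmem
  refine ⟨-(2:F) • z, ?_⟩
  rw [← lie_skew, lie_smul, lie_smul, ← hT, hz]
  module

lemma aux_exists_diag [LieAlgebra.IsKilling F L] (y : L) (hy0 : y ≠ 0)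
    (hy : IsNilpotent (LieAlgebra.ad F L y)) :
    ∃ h : L, ⁅h, y⁆ = (2:F) • y ∧ ⨆ μ, (LieAlgebra.ad F L h).eigenspace μ = ⊤ := by
  classical
  obtain ⟨z, hz⟩ := aux_exists_h (F := F) y hy
  set H : Module.End F L := LieAlgebra.ad F L ⁅y, z⁆ with hH
  have htop : ⨆ μ, H.maxGenEigenspace μ = ⊤ := by
    apply aux_split (LieAlgebra.ad F L y) (LieAlgebra.ad F L z) H (aux_ad_comm y z) _ hy
    rw [hH, aux_ad_comm, hz, map_smul]
  have hint : DirectSum.IsInternal (fun μ => H.maxGenEigenspace μ) :=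
    DirectSum.isInternal_submodule_of_iSupIndep_of_iSup_eq_top H.independent_maxGenEigenspace htop
  let e := LinearEquiv.ofBijective (DirectSum.coeLinearMap (fun μ => H.maxGenEigenspace μ)) hint
  let D : L →ₗ[F] L := (DirectSum.toModule F F L
    (fun μ => μ • (H.maxGenEigenspace μ).subtype)) ∘ₗ e.symm.toLinearMap
  have hD : ∀ μ, ∀ v ∈ H.maxGenEigenspace μ, D v = μ • v := by
    intro μ v hv
    have : e.symm v = DirectSum.lof F F (fun μ => H.maxGenEigenspace μ) μ ⟨v, hv⟩ := by
      rw [LinearEquiv.symm_apply_eq]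
      exact (DirectSum.coeLinearMap_lof (fun μ => H.maxGenEigenspace μ) μ ⟨v, hv⟩).symm
    simp only [D, LinearMap.comp_apply, LinearEquiv.coe_coe, this, DirectSum.toModule_lof]
    simp
  have hlie : ∀ μ ν : F, ∀ v ∈ H.maxGenEigenspace μ, ∀ w ∈ H.maxGenEigenspace ν,
      ⁅v, w⁆ ∈ H.maxGenEigenspace (μ + ν) := by
    intro μ ν v hv w hw
    exact LieModule.lie_mem_maxGenEigenspace_toEnd hv hw
  have hder : ∀ v w : L, D ⁅v, w⁆ = ⁅v, D w⁆ - ⁅w, D v⁆ := by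
    intro v w
    have hv : v ∈ ⨆ μ, H.maxGenEigenspace μ := by rw [htop]; trivial
    have hw : w ∈ ⨆ μ, H.maxGenEigenspace μ := by rw [htop]; trivial
    induction hv using Submodule.iSup_induction' with
    | zero => simp
    | add a b _ _ ha hb => simp only [add_lie, lie_add, map_add, ha, hb]; abel
    | mem μ v hv =>
      induction hw using Submodule.iSup_induction' with
      | zero => simp
      | add a b _ _ ha hb => simp only [add_lie, lie_add, map_add, ha, hb]; abel
      | mem ν w hw =>
        rw [hD _ _ (hlie μ ν v hv w hw), hD _ _ hv, hD _ _ hw, lie_smul, lie_smul, ← lie_skew v w]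
        module
  let D' : LieDerivation F L L := ⟨D, hder⟩
  obtain ⟨h, hh⟩ := LieDerivation.IsKilling.exists_eq_ad D'
  have hh' : ∀ v, ⁅h, v⁆ = D v := by
    intro v
    have := congrArg (fun E : LieDerivation F L L => E v) hh
    rw [LieDerivation.ad_apply_apply] at this
    exact this
  refine ⟨h, ?_, ?_⟩
  · rw [hh']
    apply hD
    rw [Module.End.mem_maxGenEigenspace]
    refine ⟨1, ?_⟩
    rw [pow_one, LinearMap.sub_apply, hH, LieAlgebra.ad_apply, hz]
    simp
  · rw [eq_top_iff, ← htop]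
    apply iSup_mono
    intro μ v hv
    rw [Module.End.mem_eigenspace_iff, LieAlgebra.ad_apply, hh', hD _ _ hv]

lemma aux_exp_mem (S : Submodule F L) (hS : ∀ v : L, IsInertial F v → v ∈ S)
    (h a b : L) (μ : F) (hμ : μ ≠ 0) (ha : ⁅h, a⁆ = μ • a) (hb : ⁅h, b⁆ = (-μ) • b) :
    ⁅a, b⁆ ∈ S := by
  have hS' : ∀ (v : L) (c : F), c ≠ 0 → ⁅h, v⁆ = c • v → v ∈ S := by
    intro v c hc hv
    by_cases h0 : v = 0
    · rw [h0]; exact zero_mem _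
    · exact hS v ⟨h0, h, c, hc, hv⟩
  by_cases hb0 : b = 0
  · simp [hb0]
  let _i : Module ℚ L := Module.compHom L (algebraMap ℚ F)
  have hq : ∀ (q : ℚ) (v : L), q • v = (q : F) • v := fun q v => by
    change (algebraMap ℚ F q) • v = _
    simp
  let _j : LieAlgebra ℚ L := { lie_smul := fun q x y => by rw [hq, hq, lie_smul] }
  have hn := aux_ad_nilp h a μ hμ ha
  let D : LieDerivation F L L := LieDerivation.ad F L a
  have hDa : D.toLinearMap = LieAlgebra.ad F L a := by
    ext v; simp [D]
  have hDn : IsNilpotent D.toLinearMap := by rw [hDa]; exact hn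
  let φ := LieDerivation.exp D hDn
  have h1 : φ b ∈ S := by
    apply hS
    refine ⟨by simpa using hb0, φ h, -μ, neg_ne_zero.2 hμ, ?_⟩
    rw [← LieEquiv.map_lie, hb, map_smul]
  obtain ⟨n, hn⟩ := hDn
  have hn2 : D.toLinearMap ^ (n+2) = 0 := by rw [pow_add, hn, zero_mul]
  have h2 : φ b = ∑ i ∈ Finset.range (n+2), ((i.factorial : ℚ)⁻¹ • (LieAlgebra.ad F L a) ^ i) b := by
    rw [show φ b = _ from LieDerivation.exp_map_apply D _ b, IsNilpotent.exp_eq_sum hn2, LinearMap.sum_apply, hDa]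
  have hk : ∀ k : ℕ, ⁅h, ((LieAlgebra.ad F L a) ^ k) b⁆
      = (((k:F) - 1) * μ) • ((LieAlgebra.ad F L a) ^ k) b := by
    intro k
    induction k with
    | zero => simp [hb]
    | succ k ih =>
      rw [pow_succ', Module.End.mul_apply, LieAlgebra.ad_apply, leibniz_lie, ih, ha, lie_smul,
        smul_lie]
      push_cast
      module
  rw [Finset.sum_range_succ', Finset.sum_range_succ'] at h2
  have h3 : ⁅a, b⁆ = φ b - b - ∑ i ∈ Finset.range n,
      (((i+1+1).factorial : ℚ)⁻¹ • (LieAlgebra.ad F L a) ^ (i+1+1)) b := by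
    rw [h2]; simp
  rw [h3]
  refine S.sub_mem (S.sub_mem h1 (hS' b _ (neg_ne_zero.2 hμ) hb)) (S.sum_mem fun i _ => ?_)
  rw [LinearMap.smul_apply, hq]
  refine S.smul_mem _ (hS' _ _ ?_ (hk _))
  refine mul_ne_zero ?_ hμ
  push_cast
  rw [add_sub_cancel_right]
  exact_mod_cast Nat.succ_ne_zero i

lemma aux_main [LieAlgebra.IsSimple F L] (x y : L) (c : F) (hc : c ≠ 0) (hy0 : y ≠ 0)
    (hxy : ⁅x, y⁆ = c • y) : InertiallyGenerated F L := by
  obtain ⟨h, hhy, htop⟩ := aux_exists_diag (F := F) y hy0 (aux_ad_nilp x y c hc hxy)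
  let S := Submodule.span F {v : L | IsInertial F v}
  let G : Set L := {v | ∃ μ : F, μ ≠ 0 ∧ ⁅h, v⁆ = μ • v} ∪
    {v | ∃ (μ : F) (a b : L), μ ≠ 0 ∧ ⁅h, a⁆ = μ • a ∧ ⁅h, b⁆ = (-μ) • b ∧ ⁅a, b⁆ = v}
  have hadd : ∀ (μ ν : F) (a b : L), ⁅h, a⁆ = μ • a → ⁅h, b⁆ = ν • b →
      ⁅h, ⁅a, b⁆⁆ = (μ + ν) • ⁅a, b⁆ := by
    intro μ ν a b ha hb
    rw [leibniz_lie, ha, hb, smul_lie, lie_smul, add_smul]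
  have hGS : Submodule.span F G ≤ S := by
    rw [Submodule.span_le]
    rintro v (⟨μ, hμ, hv⟩ | ⟨μ, a, b, hμ, ha, hb, rfl⟩)
    · by_cases h0 : v = 0
      · rw [h0]; exact zero_mem _
      · exact Submodule.subset_span ⟨h0, h, μ, hμ, hv⟩
    · exact aux_exp_mem S (fun v hv => Submodule.subset_span hv) h a b μ hμ ha hb
  have hstep : ∀ (ν : F) (w : L), ⁅h, w⁆ = ν • w → ∀ g ∈ G, ⁅w, g⁆ ∈ Submodule.span F G := by
    rintro ν w hw g (⟨μ, hμ, hg⟩ | ⟨μ, a, b, hμ, ha, hb, rfl⟩)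
    · by_cases hs : ν + μ = 0
      · apply Submodule.subset_span
        right
        have hν : ν = -μ := eq_neg_of_add_eq_zero_left hs
        refine ⟨ν, w, g, by rw [hν]; exact neg_ne_zero.2 hμ, hw, ?_, rfl⟩
        rw [hν, neg_neg]; exact hg
      · exact Submodule.subset_span (Or.inl ⟨ν + μ, hs, hadd _ _ _ _ hw hg⟩)
    · by_cases hν : ν = 0
      · subst hν
        rw [leibniz_lie]
        refine add_mem (Submodule.subset_span (Or.inr ⟨μ, ⁅w, a⁆, b, hμ, ?_, hb, rfl⟩))
          (Submodule.subset_span (Or.inr ⟨μ, a, ⁅w, b⁆, hμ, ha, ?_, rfl⟩))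
        · simpa using hadd _ _ _ _ hw ha
        · simpa using hadd _ _ _ _ hw hb
      · refine Submodule.subset_span (Or.inl ⟨ν, hν, ?_⟩)
        have := hadd _ _ _ _ hw (hadd _ _ _ _ ha hb)
        simpa using this
  let J : LieIdeal F L := { Submodule.span F G with
    lie_mem := by
      intro w m hm
      change m ∈ Submodule.span F G at hm
      change ⁅w, m⁆ ∈ Submodule.span F G
      have hw : w ∈ ⨆ μ, (LieAlgebra.ad F L h).eigenspace μ := by rw [htop]; trivial
      induction hw using Submodule.iSup_induction' with
      | zero => simp
      | add a b _ _ ha hb => rw [add_lie]; exact add_mem ha hb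
      | mem ν w hw =>
        rw [Module.End.mem_eigenspace_iff, LieAlgebra.ad_apply] at hw
        induction hm using Submodule.span_induction with
        | mem g hg => exact hstep ν w hw g hg
        | zero => simp
        | add a b _ _ ha hb => rw [lie_add]; exact add_mem ha hb
        | smul r a _ ha => rw [lie_smul]; exact Submodule.smul_mem _ _ ha }
  have hyJ : y ∈ J := by
    change y ∈ Submodule.span F G
    exact Submodule.subset_span (Or.inl ⟨2, two_ne_zero, hhy⟩)
  have hJ : J = ⊤ := by
    rcases LieAlgebra.IsSimple.eq_bot_or_eq_top (R := F) J with h0 | h0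
    · rw [h0] at hyJ
      exact absurd (by simpa using hyJ) hy0
    · exact h0
  have hStop : ⊤ ≤ S := by
    intro v _
    have : v ∈ J := by rw [hJ]; trivial
    exact hGS this
  let b := Module.Basis.ofSpan hStop
  have hb : ∀ i, IsInertial F (b i) := fun i => Module.Basis.ofSpan_subset hStop ⟨i, rfl⟩
  have : Fintype _ := FiniteDimensional.fintypeBasisIndex b
  exact ⟨_, b.reindex (Fintype.equivFin _), fun i => by simpa using hb _⟩
end lie

/-- Let `F` have characteristic zero and let `L` be a simple Lie subalgebra of `sl n F`.
If some adjoint endomorphism `ad x : L → L` has a nonzero eigenvalue in `F`,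
then `L` is inertially generated. -/
theorem stmt_10 (F : Type*) [Field F] [CharZero F] (n : ℕ) (hn : 0 < n)
    (L : LieSubalgebra F (Matrix (Fin n) (Fin n) F))
    (hL : L ≤ LieAlgebra.SpecialLinear.sl (Fin n) F)
    (hsimple : LieAlgebra.IsSimple F L)
    (hx : ∃ (x : L) (c : F), c ≠ 0 ∧
      Module.End.HasEigenvalue (LieAlgebra.ad F L x) c) :
    InertiallyGenerated F L := by
  obtain ⟨x, c, hc, h⟩ := hx
  obtain ⟨y, hy⟩ := h.exists_hasEigenvector
  exact aux_main x y c hc hy.2 hy.apply_eq_smul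
end

section
/- Let F be a field of characteristic 0, n a positive integer, and L a Lie subalgebra of sl_n(F) that is simple as a Lie algebra. If there exists x ∈ L such that the adjoint endomorphism ad x : L → L has two distinct eigenvalues λ₁ ≠ λ₂ in F, then L is inertially generated. -/
attribute [local instance 100] LieRing.ofAssociativeRing

section Helpers
open Polynomial TensorProduct

lemma aux_poly (F K : Type*) [Field F] [CharZero F] [Field K] [Algebra F K] [Algebra.IsIntegral F K]
    (s : Finset K) (k : ℕ) :
    ∃ Q : F[X], ∀ a ∈ s, (minpoly F a) ^ k ∣ Q - C (Algebra.normalizedTrace F K a) := by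
  classical
  let I : (s.image (minpoly F)) → Ideal F[X] := fun p => Ideal.span {p.1 ^ k}
  have hI : Pairwise (Function.onFun IsCoprime I) := by
    rintro ⟨p, hp⟩ ⟨q, hq⟩ hpq
    simp only [Function.onFun, I]
    rw [Ideal.isCoprime_span_singleton_iff]
    apply IsCoprime.pow
    obtain ⟨a, ha, rfl⟩ := Finset.mem_image.mp hp
    obtain ⟨b, hb, rfl⟩ := Finset.mem_image.mp hq
    have h1 := minpoly.irreducible (Algebra.IsIntegral.isIntegral (R := F) a)
    have h2 := minpoly.irreducible (Algebra.IsIntegral.isIntegral (R := F) b)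
    rw [h1.coprime_iff_not_dvd]
    intro hd
    apply hpq
    have := eq_of_monic_of_associated (minpoly.monic (Algebra.IsIntegral.isIntegral (R := F) a))
      (minpoly.monic (Algebra.IsIntegral.isIntegral (R := F) b)) (h1.associated_of_dvd h2 hd)
    exact Subtype.ext this
  obtain ⟨Q, hQ⟩ := Ideal.exists_forall_sub_mem_ideal hI
    (fun p => C ((p.1.natDegree : F)⁻¹ • -p.1.nextCoeff))
  refine ⟨Q, fun a ha => ?_⟩
  have := hQ ⟨minpoly F a, Finset.mem_image_of_mem _ ha⟩
  rw [Ideal.mem_span_singleton] at this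
  rw [Algebra.normalizedTrace_minpoly]
  exact this

lemma aux_diag {F V : Type*} [Field F] [AddCommGroup V] [Module F V] (D : Module.End F V)
    (s : Finset F) (v : V) (h : aeval D (∏ c ∈ s, (X - C c)) v = 0) :
    v ∈ ⨆ c, D.eigenspace c := by
  classical
  induction s using Finset.induction_on generalizing v with
  | empty => simp at h; simp [h]
  | insert c s hc ih =>
    rw [Finset.prod_insert hc] at h
    have hco : IsCoprime (X - C c) (∏ c ∈ s, (X - C c)) := by
      apply IsCoprime.prod_right
      intro d hd
      apply isCoprime_X_sub_C_of_isUnit_sub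
      rw [isUnit_iff_ne_zero, sub_ne_zero]
      rintro rfl; exact hc hd
    have := sup_ker_aeval_eq_ker_aeval_mul_of_coprime D hco
    have hv : v ∈ LinearMap.ker (aeval D ((X - C c) * ∏ c ∈ s, (X - C c))) := h
    rw [← this] at hv
    obtain ⟨a, ha, b, hb, rfl⟩ := Submodule.mem_sup.mp hv
    refine add_mem ?_ (ih b hb)
    refine Submodule.mem_iSup_of_mem c ?_
    rw [Module.End.mem_eigenspace_iff]
    simpa [sub_eq_zero] using ha

lemma aux_nilp {F A : Type*} [Field F] [CharZero F] [Ring A] [Algebra F A] [FiniteDimensional F A]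
    (X Y : A) (c : F) (hc : c ≠ 0) (h : X * Y - Y * X = c • Y) : IsNilpotent Y := by
  by_contra hn
  have hk : ∀ k : ℕ, X * Y ^ k - Y ^ k * X = (k * c) • Y ^ k := by
    intro k
    induction k with
    | zero => simp
    | succ k ih =>
      have : X * Y ^ (k+1) - Y ^ (k+1) * X
        = (X * Y ^ k - Y ^ k * X) * Y + Y ^ k * (X * Y - Y * X) := by
        rw [pow_succ]; noncomm_ring
      rw [this, ih, h]
      simp only [pow_succ, smul_mul_assoc, mul_smul_comm, ← add_smul]
      congr 1; push_cast; ring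
  let T : Module.End F A := LinearMap.mulLeft F X - LinearMap.mulRight F X
  have hT : ∀ k : ℕ, T.HasEigenvalue (k * c) := by
    intro k
    refine Module.End.hasEigenvalue_of_hasEigenvector (x := Y ^ k) ⟨?_, ?_⟩
    · rw [Module.End.mem_eigenspace_iff]
      simpa [T] using hk k
    · intro h0; exact hn ⟨k, h0⟩
  have hfin := T.finite_hasEigenvalue
  refine Set.infinite_of_injective_forall_mem (f := fun k : ℕ => (k : F) * c) ?_ hT hfin
  intro a b hab
  simpa [hc] using hab

lemma aux_span {F V : Type*} [Field F] [CharZero F] [AddCommGroup V] [Module F V]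
    (S : Submodule F V) (n : ℕ) (v : ℕ → V) 
    (h : ∀ t : F, ∑ i ∈ Finset.range n, t ^ i • v i ∈ S) (i : ℕ) (hi : i < n) : v i ∈ S := by
  by_contra hv
  obtain ⟨f, hf, hS⟩ := Submodule.exists_dual_map_eq_bot_of_notMem hv inferInstance
  let p : F[X] := ∑ i ∈ Finset.range n, C (f (v i)) * X ^ i
  have hp : p = 0 := by
    apply Polynomial.funext
    intro t
    have : f (∑ i ∈ Finset.range n, t ^ i • v i) ∈ S.map f := Submodule.mem_map_of_mem (h t)
    rw [hS, Submodule.mem_bot] at this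
    simp only [p, eval_finsetSum, eval_mul, eval_C, eval_pow, eval_X, eval_zero]
    rw [← this, map_sum]
    exact Finset.sum_congr rfl fun i _ => by simp [mul_comm]
  apply hf
  have := congrArg (fun q => coeff q i) hp
  simpa [p, finsetSum_coeff, coeff_C_mul, coeff_X_pow, hi] using this

lemma aux_adnilp {F L : Type*} [Field F] [CharZero F] [LieRing L] [LieAlgebra F L]
    [FiniteDimensional F L] (y : L) (hy : IsInertial F y) : IsNilpotent (LieAlgebra.ad F L y) := by
  obtain ⟨-, x, c, hc, h⟩ := hy
  refine aux_nilp (LieAlgebra.ad F L x) (LieAlgebra.ad F L y) c hc ?_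
  rw [← map_smul, ← h, LieHom.map_lie]
  rfl

lemma aux_lie {F L : Type*} [Field F] [CharZero F] [LieRing L] [LieAlgebra F L]
    [FiniteDimensional F L] (y z : L) (hy : IsInertial F y) (hz : IsInertial F z) :
    ⁅y, z⁆ ∈ Submodule.span F {w : L | IsInertial F w} := by
  let _ : Module ℚ L := Module.compHom L (algebraMap ℚ F)
  have hq : ∀ (q : ℚ) (v : L), q • v = (q : F) • v := fun q v => rfl
  let _ : LieAlgebra ℚ L := { lie_smul := fun t x m => by simp only [hq, lie_smul] }
  obtain ⟨N, hN⟩ := aux_adnilp y hy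
  have key : ∀ t : F, ∑ i ∈ Finset.range (N + 2), t ^ i •
      (((i.factorial : F)⁻¹) • ((LieAlgebra.ad F L y) ^ i) z) ∈
      Submodule.span F {w : L | IsInertial F w} := by
    intro t
    let D : LieDerivation F L L := LieDerivation.ad F L (t • y)
    have hD : D.toLinearMap = t • LieAlgebra.ad F L y := by
      ext v; simp [D]
    have hDN : D.toLinearMap ^ (N + 2) = 0 := by
      rw [hD, _root_.smul_pow, pow_add (LieAlgebra.ad F L y), hN]; simp
    have hDn : IsNilpotent D.toLinearMap := ⟨_, hDN⟩
    have e : ∑ i ∈ Finset.range (N + 2), t ^ i •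
      (((i.factorial : F)⁻¹) • ((LieAlgebra.ad F L y) ^ i) z) = D.exp hDn z := by
      rw [LieDerivation.exp_map_apply, IsNilpotent.exp_eq_sum hDN, LinearMap.sum_apply]
      refine Finset.sum_congr rfl fun i _ => ?_
      rw [LinearMap.smul_apply, hq, hD, _root_.smul_pow, LinearMap.smul_apply, smul_comm]
      simp
    rw [e]
    apply Submodule.subset_span
    obtain ⟨h0, x, c, hc, h⟩ := hz
    refine ⟨by simpa using h0, D.exp hDn x, c, hc, ?_⟩
    rw [← LieEquiv.map_lie, h, map_smul]
  have := aux_span _ _ _ key 1 (by omega)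
  simpa using this

lemma aux_final {F L : Type*} [Field F] [CharZero F] [LieRing L] [LieAlgebra F L]
    [FiniteDimensional F L] (h : Submodule.span F {w : L | IsInertial F w} = ⊤) :
    InertiallyGenerated F L := by
  obtain ⟨b, hb, hspan, hli⟩ := exists_linearIndependent F {w : L | IsInertial F w}
  let B : Module.Basis b F L := Module.Basis.mk hli (by rw [Subtype.range_coe, hspan, h])
  have : Finite b := Module.Finite.finite_basis B
  have e := Finite.equivFin b
  refine ⟨_, B.reindex e, fun i => ?_⟩
  rw [Module.Basis.reindex_apply, Module.Basis.mk_apply]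
  exact hb (e.symm i).2

lemma aux_main_s11 {F L : Type*} [Field F] [CharZero F] [LieRing L] [LieAlgebra F L]
    [FiniteDimensional F L] [LieAlgebra.IsSimple F L] (h : L)
    (hdiag : ∀ v, v ∈ ⨆ c, (LieAlgebra.ad F L h).eigenspace c)
    (y : L) (hy0 : y ≠ 0) (a : F) (ha : a ≠ 0) (hy : ⁅h, y⁆ = a • y) :
    InertiallyGenerated F L := by
  apply aux_final
  let S : LieSubalgebra F L :=
    { Submodule.span F {w : L | IsInertial F w} with
      lie_mem' := by
        intro u v hu hv
        change ⁅u, v⁆ ∈ Submodule.span F {w : L | IsInertial F w}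
        change u ∈ Submodule.span F {w : L | IsInertial F w} at hu
        change v ∈ Submodule.span F {w : L | IsInertial F w} at hv
        induction hu using Submodule.span_induction with
        | mem u hu =>
          induction hv using Submodule.span_induction with
          | mem v hv => exact aux_lie u v hu hv
          | zero => simp
          | add v w _ _ h1 h2 => rw [lie_add]; exact add_mem h1 h2
          | smul t v _ h1 => rw [lie_smul]; exact Submodule.smul_mem _ _ h1
        | zero => simp
        | add v w _ _ h1 h2 => rw [add_lie]; exact add_mem h1 h2
        | smul t v _ h1 => rw [smul_lie]; exact Submodule.smul_mem _ _ h1 }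
  let X : Set L := {w | ∃ c : F, c ≠ 0 ∧ ⁅h, w⁆ = c • w}
  let G := LieSubalgebra.lieSpan F L X
  have hGS : G ≤ S := by
    rw [LieSubalgebra.lieSpan_le]
    rintro w ⟨c, hc, hw⟩
    by_cases h0 : w = 0
    · rw [h0]; exact S.zero_mem
    · exact Submodule.subset_span ⟨h0, h, c, hc, hw⟩
  have hXG : X ⊆ G := LieSubalgebra.subset_lieSpan
  have h0 : ∀ z : L, ⁅h, z⁆ = 0 → ∀ g ∈ G, ⁅z, g⁆ ∈ G := by
    intro z hz g hg
    induction hg using LieSubalgebra.lieSpan_induction with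
    | mem w hw =>
      obtain ⟨c, hc, hw⟩ := hw
      apply hXG
      refine ⟨c, hc, ?_⟩
      rw [leibniz_lie, hz, hw]; simp
    | zero => simp
    | add v w _ _ h1 h2 => rw [lie_add]; exact add_mem h1 h2
    | smul t v _ h1 => rw [lie_smul]; exact G.smul_mem _ h1
    | lie v w hv hw h1 h2 =>
      rw [leibniz_lie]; exact add_mem (G.lie_mem h1 hw) (G.lie_mem hv h2)
  have hid : ∀ z : L, ∀ g ∈ G, ⁅z, g⁆ ∈ G := by
    intro z g hg
    have hz := hdiag z
    induction hz using Submodule.iSup_induction' with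
    | mem c z hz =>
      rw [Module.End.mem_eigenspace_iff, LieAlgebra.ad_apply] at hz
      by_cases hc : c = 0
      · exact h0 z (by simp [hz, hc]) g hg
      · exact G.lie_mem (hXG ⟨c, hc, hz⟩) hg
    | zero => simp
    | add v w _ _ h1 h2 => rw [add_lie]; exact add_mem h1 h2
  let I : LieIdeal F L := { G.toSubmodule with lie_mem := fun {z g} hg => hid z g hg }
  have hyI : y ∈ I := hXG ⟨a, ha, hy⟩
  have hI : I = ⊤ := by
    refine (LieAlgebra.IsSimple.eq_bot_or_eq_top I).resolve_left fun hb => hy0 ?_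
    rw [hb] at hyI; simpa using hyI
  rw [eq_top_iff]
  intro v _
  have : v ∈ I := hI ▸ LieSubmodule.mem_top v
  exact hGS this

lemma aux_deriv {F L : Type*} [Field F] [CharZero F] [LieRing L] [LieAlgebra F L]
    [FiniteDimensional F L] (x : L) :
    ∃ D : LieDerivation F L L, (∀ v, v ∈ ⨆ c, Module.End.eigenspace D.toLinearMap c) ∧
      ∀ (a : F) (y : L), ⁅x, y⁆ = a • y → D y = a • y := by
  classical
  let K := AlgebraicClosure F
  let τ := Algebra.normalizedTrace F K
  let f : Module.End F L := LieAlgebra.ad F L x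
  let fK : Module.End K (K ⊗[F] L) := LieModule.toEnd K (K ⊗[F] L) (K ⊗[F] L) (1 ⊗ₜ x)
  have hfK : fK = Module.End.baseChangeHom F K L f := LieModule.toEnd_baseChange ..  
  let s : Finset K := fK.finite_hasEigenvalue.toFinset
  let k := Module.finrank K (K ⊗[F] L)
  obtain ⟨Q, hQ⟩ := aux_poly F K s k
  let d : Module.End F L := aeval f Q
  let dK : Module.End K (K ⊗[F] L) := Module.End.baseChangeHom F K L d
  have hdK : dK = aeval fK Q := by
    rw [hfK]; exact (aeval_algHom_apply _ _ _).symm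
  have hs : ∀ α v, v ∈ fK.maxGenEigenspace α → v ≠ 0 → α ∈ s := by
    intro α v hv h0
    simp only [s, Set.Finite.mem_toFinset, Set.mem_ofPred_eq]
    have : fK.maxGenEigenspace α ≠ ⊥ := by
      intro hb; rw [hb] at hv; exact h0 (by simpa using hv)
    have h2 : fK.HasUnifEigenvalue α ⊤ := this
    exact h2.lt zero_lt_one
  have hact : ∀ α v, v ∈ fK.maxGenEigenspace α → dK v = algebraMap F K (τ α) • v := by
    intro α v hv
    by_cases h0 : v = 0
    · simp [h0]
    obtain ⟨r, hr⟩ := hQ α (hs α v hv h0)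
    rw [Module.End.maxGenEigenspace_eq_genEigenspace_finrank, Module.End.mem_genEigenspace_nat,
      LinearMap.mem_ker] at hv
    have hdvd : (X - C α) ^ k ∣ (Q - C (τ α)).map (algebraMap F K) := by
      rw [hr, Polynomial.map_mul, Polynomial.map_pow]
      refine Dvd.dvd.mul_right (pow_dvd_pow_of_dvd ?_ _) _
      rw [dvd_iff_isRoot, IsRoot, eval_map_algebraMap]
      exact minpoly.aeval F α
    obtain ⟨q, hq⟩ := hdvd
    have h1 : aeval fK ((Q - C (τ α)).map (algebraMap F K)) v = 0 := by
      rw [hq, mul_comm, map_mul, Module.End.mul_apply]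
      have : aeval fK ((X - C α) ^ k) v = 0 := by
        rw [← hv]; simp [k, Algebra.algebraMap_eq_smul_one]
      rw [this, map_zero]
    rw [aeval_map_algebraMap, map_sub, ← hdK, LinearMap.sub_apply, sub_eq_zero] at h1
    rw [h1, aeval_C]
    simp
  have htop : ∀ v : K ⊗[F] L, v ∈ ⨆ α, fK.maxGenEigenspace α := fun v => by
    rw [Module.End.iSup_maxGenEigenspace_eq_top]; trivial
  have hinj : Function.Injective (fun v : L => (1 : K) ⊗ₜ[F] v) :=
    Module.FaithfullyFlat.tensorProduct_mk_injective (A := F) (B := K) L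
  have hd1 : ∀ v : L, dK ((1 : K) ⊗ₜ v) = 1 ⊗ₜ d v := fun v => by
    exact LinearMap.baseChange_tmul _ _ _
  have hder : ∀ u v : K ⊗[F] L, dK ⁅u, v⁆ = ⁅u, dK v⁆ - ⁅v, dK u⁆ := by
    intro u v
    have hu := htop u
    induction hu using Submodule.iSup_induction' with
    | mem α u hu =>
      have hv := htop v
      induction hv using Submodule.iSup_induction' with
      | mem β v hv =>
        rw [hact _ _ (LieModule.lie_mem_maxGenEigenspace_toEnd hu hv), hact _ _ hu, hact _ _ hv]
        rw [lie_smul, lie_smul, ← lie_skew u v, map_add, map_add, add_smul]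
        simp only [smul_neg]
        abel
      | zero => simp
      | add v w _ _ h1 h2 => 
        rw [lie_add, map_add, h1, h2, map_add, lie_add, add_lie]; abel
    | zero => simp
    | add v w _ _ h1 h2 =>
        rw [add_lie, map_add, h1, h2, map_add, lie_add, add_lie]; abel
  let D : LieDerivation F L L :=
    { d with
      leibniz' := by
        intro u v
        apply hinj
        have := hder (1 ⊗ₜ u) (1 ⊗ₜ v)
        simp only [hd1, LieAlgebra.ExtendScalars.bracket_tmul, mul_one, ← tmul_sub] at this
        exact this }
  have hDd : D.toLinearMap = d := rfl
  refine ⟨D, ?_, ?_⟩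
  · intro v
    rw [hDd]
    apply aux_diag d (s.image τ)
    suffices h : aeval d (∏ c ∈ s.image τ, (X - C c)) = 0 by rw [h]; rfl
    apply LinearMap.baseChangeHom_injective F L K
    rw [map_zero]
    have : Module.End.baseChangeHom F K L (aeval d (∏ c ∈ s.image τ, (X - C c)))
      = aeval dK (∏ c ∈ s.image τ, (X - C c)) := (aeval_algHom_apply _ _ _).symm
    refine this.trans ?_
    refine LinearMap.ext fun w => ?_
    have hw := htop w
    induction hw using Submodule.iSup_induction' with
    | mem α w hw =>
      by_cases h0 : w = 0
      · simp [h0]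
      have h1 := Module.End.aeval_apply_of_mem_apply_eq_smul (hact α w hw)
        (p := (∏ c ∈ s.image τ, (X - C c)).map (algebraMap F K))
      rw [aeval_map_algebraMap] at h1
      rw [h1, eval_map_algebraMap, aeval_algebraMap_apply, map_prod,
        Finset.prod_eq_zero (Finset.mem_image_of_mem τ (hs α w hw h0)) (by simp)]
      simp
    | zero => simp
    | add v w _ _ h1 h2 => rw [map_add, h1, h2, map_add]
  · intro a y hy
    apply hinj
    change (1 : K) ⊗ₜ[F] d y = 1 ⊗ₜ (a • y)
    rw [← hd1, hact (algebraMap F K a)]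
    · simp [τ]
    · rw [Module.End.mem_maxGenEigenspace]
      refine ⟨1, ?_⟩
      simp [fK, hy]

end Helpers

/-- Let `F` have characteristic zero and let `L` be a simple Lie subalgebra of `sl n F`.
If some adjoint endomorphism `ad x : L → L` has two distinct eigenvalues in `F`,
then `L` is inertially generated. -/
theorem stmt_11 (F : Type*) [Field F] [CharZero F] (n : ℕ) (hn : 0 < n)
    (L : LieSubalgebra F (Matrix (Fin n) (Fin n) F))
    (hL : L ≤ LieAlgebra.SpecialLinear.sl (Fin n) F)
    (hsimple : LieAlgebra.IsSimple F L)
    (hx : ∃ (x : L) (c₁ c₂ : F), c₁ ≠ c₂ ∧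
      Module.End.HasEigenvalue (LieAlgebra.ad F L x) c₁ ∧
      Module.End.HasEigenvalue (LieAlgebra.ad F L x) c₂) :
    InertiallyGenerated F L := by
  obtain ⟨x, c₁, c₂, hne, h₁, h₂⟩ := hx
  obtain ⟨a, ha, hev⟩ : ∃ a : F, a ≠ 0 ∧ Module.End.HasEigenvalue (LieAlgebra.ad F L x) a := by
    by_cases h : c₁ = 0
    · exact ⟨c₂, fun h' => hne (h.trans h'.symm), h₂⟩
    · exact ⟨c₁, h, h₁⟩
  obtain ⟨y, hy, hy0⟩ := hev.exists_hasEigenvector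
  rw [Module.End.mem_eigenspace_iff, LieAlgebra.ad_apply] at hy
  obtain ⟨D, hD, hDy⟩ := aux_deriv (F := F) x
  obtain ⟨h, hh⟩ := LieDerivation.IsKilling.exists_eq_ad D
  have e : D.toLinearMap = LieAlgebra.ad F L h := by rw [← hh]; ext1 v; simp
  refine aux_main_s11 h (by rw [← e]; exact hD) y hy0 a ha ?_
  rw [← hDy a y hy, ← hh]; simp
end

section
/- Let F be a field of characteristic 0 and D a finite-dimensional division algebra over F, regarded as a Lie algebra over F with bracket ⁅x, y⁆ = x*y − y*x. Then for every x ∈ D the adjoint endomorphism ad x : D → D is semisimple; in particular, D is a toral Lie algebra. -/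
attribute [local instance 100] LieRing.ofAssociativeRing

/-- A finite-dimensional division algebra `D` over a field `F` of characteristic zero,
regarded as a Lie algebra with the commutator bracket `⁅x, y⁆ = x * y - y * x`, has all
adjoint endomorphisms semisimple; in particular, `D` is a toral Lie algebra. -/
theorem stmt_12 (F D : Type*) [Field F] [CharZero F] [DivisionRing D] [Algebra F D]
    [FiniteDimensional F D] :
    IsToral F D := by
  intro x p hp
  have hsq : Squarefree (minpoly F x) :=
    (minpoly.irreducible (IsIntegral.of_finite F x)).squarefree
  have hl : Module.End.IsSemisimple (LinearMap.mulLeft F x) := by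
    refine Module.End.isSemisimple_of_squarefree_aeval_eq_zero hsq ?_
    have h : ∀ q : Polynomial F, Polynomial.aeval (LinearMap.mulLeft F x) q
        = LinearMap.mulLeft F (Polynomial.aeval x q) :=
      fun q => Polynomial.aeval_algHom_apply (Algebra.lmul F D) x q
    rw [h, minpoly.aeval, LinearMap.mulLeft_zero_eq_zero]
  have hr : Module.End.IsSemisimple (LinearMap.mulRight F x) := by
    refine Module.End.isSemisimple_of_squarefree_aeval_eq_zero hsq ?_
    have h : ∀ q : Polynomial F, Polynomial.aeval (LinearMap.mulRight F x) q
        = LinearMap.mulRight F (Polynomial.aeval x q) := by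
      intro q
      ext y
      simp [Polynomial.aeval_eq_sum_range, LinearMap.sum_apply, Finset.mul_sum,
        LinearMap.pow_mulRight]
    rw [h, minpoly.aeval, LinearMap.mulRight_zero_eq_zero]
  have hs := hl.sub_of_commute (LinearMap.commute_mulLeft_right x x) hr
  rw [Module.End.isSemisimple_iff] at hs
  obtain ⟨q, hq, hc⟩ := hs p (fun y hy => hp y hy)
  exact ⟨q, fun y hy => hq hy, hc⟩
end

section
/- Let p be a prime and D a finite-dimensional central division algebra over ℚ_p (its center is exactly ℚ_p) with dim_{ℚ_p} D > 1. Let D₀ = {x ∈ D : tr(L_x) = 0}, where L_x : D → D is the ℚ_p-linear map of left multiplication by x and tr denotes the trace of a ℚ_p-linear endomorphism. Then D₀ is closed under the bracket ⁅x, y⁆ = x*y − y*x, and as a Lie algebra over ℚ_p, D₀ is simple, perfect, and toral; in particular, D₀ is not pluperfect. -/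
attribute [local instance 100] LieRing.ofAssociativeRing

set_option linter.unusedSectionVars false

section Aux
variable {F D : Type*} [Field F] [CharZero F] [DivisionRing D] [Algebra F D] [FiniteDimensional F D]

/-- trace -/
noncomputable def auxTr (F D : Type*) [Field F] [DivisionRing D] [Algebra F D] : D →ₗ[F] F :=
  (LinearMap.trace F D) ∘ₗ (Algebra.lmul F D).toLinearMap

lemma auxTr_apply (x : D) : auxTr F D x = LinearMap.trace F D (Algebra.lmul F D x) := rfl

lemma aux_tr_comm (x y : D) : auxTr F D (x * y) = auxTr F D (y * x) := by
  simp only [auxTr_apply, map_mul]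
  exact LinearMap.trace_mul_comm F _ _

lemma aux_tr_one (c : F) : auxTr F D (algebraMap F D c) = (Module.finrank F D : F) * c := by
  rw [Algebra.algebraMap_eq_smul_one, map_smul, auxTr_apply, map_one, LinearMap.trace_one]
  simp [mul_comm]

lemma aux_fr : (Module.finrank F D : F) ≠ 0 := by
  have : 0 < Module.finrank F D := Module.finrank_pos
  exact_mod_cast this.ne'

lemma aux_nondeg (z : D) (h : ∀ y, auxTr F D (z * y) = 0) : z = 0 := by
  by_contra hz
  have h1 := h z⁻¹
  rw [mul_inv_cancel₀ hz] at h1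
  have h2 := aux_tr_one (F := F) (D := D) 1
  rw [map_one, h1] at h2
  exact aux_fr (F := F) (D := D) (by simpa using h2.symm)

/-- functionals are trace pairings -/
lemma aux_repr (f : Module.Dual F D) : ∃ z : D, ∀ y, f y = auxTr F D (z * y) := by
  let T : D →ₗ[F] Module.Dual F D :=
    (LinearMap.mul F D).compr₂ (auxTr F D)
  have hT : Function.Injective T := by
    rw [← LinearMap.ker_eq_bot, LinearMap.ker_eq_bot']
    intro z hz
    exact aux_nondeg (F := F) z fun y => by simpa [T] using LinearMap.congr_fun hz y
  have hS : Function.Surjective T :=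
    (LinearMap.injective_iff_surjective_of_finrank_eq_finrank
      (Subspace.dual_finrank_eq (K := F) (V := D)).symm).1 hT
  obtain ⟨z, hz⟩ := hS f
  exact ⟨z, fun y => by simp [← hz, T]⟩

lemma aux_comm_span (hc : Subalgebra.center F D = ⊥) (U : Submodule F D)
    (hU : ∀ x y : D, x * y - y * x ∈ U) (d : D) (hd : auxTr F D d = 0) : d ∈ U := by
  by_contra hdU
  obtain ⟨f, hf, hfU⟩ := Submodule.exists_le_ker_of_notMem hdU
  obtain ⟨z, hz⟩ := aux_repr f
  have hzc : z ∈ Subalgebra.center F D := by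
    rw [Subalgebra.mem_center_iff]
    intro x
    symm
    rw [← sub_eq_zero]
    apply aux_nondeg (F := F)
    intro y
    have h1 : f (x * y - y * x) = 0 := hfU (hU x y)
    rw [hz, mul_sub, map_sub, ← mul_assoc, ← mul_assoc, aux_tr_comm (z * y) x, ← mul_assoc,
      ← map_sub, ← sub_mul] at h1
    exact h1
  rw [hc, Algebra.mem_bot] at hzc
  obtain ⟨c, rfl⟩ := hzc
  apply hf
  rw [hz, ← Algebra.smul_def, map_smul, hd, smul_zero]

lemma aux_herstein (U : Submodule F D) (hU : ∀ u ∈ U, ∀ a : D, u * a - a * u ∈ U)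
    (u a : D) (hu : u ∈ U) (hua : u * a - a * u ≠ 0) (b c : D) : b * c - c * b ∈ U := by
  -- T = {x | [x, A] ⊆ U}
  have hT : ∀ x y : D, (∀ a, x * a - a * x ∈ U) → (∀ a, y * a - a * y ∈ U) →
      ∀ a, (x * y) * a - a * (x * y) ∈ U := by
    intro x y hx hy a
    have := U.add_mem (hx (y * a)) (hy (a * x))
    convert this using 1
    noncomm_ring
  by_cases h : ∀ x y : D, (∀ a, x * a - a * x ∈ U) → (∀ a, y * a - a * y ∈ U) → x * y - y * x = 0
  · exfalso
    have h2 : ∀ t : D, u * (u * t - t * u) - (u * t - t * u) * u = 0 := fun t =>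
      h u _ (hU u hu) (hU _ (hU u hu t))
    apply hua
    have e : (2 : D) * ((u * a - a * u) * (u * a - a * u)) =
        (u * (u * (a * a) - (a * a) * u) - (u * (a * a) - (a * a) * u) * u)
        - a * (u * (u * a - a * u) - (u * a - a * u) * u)
        - (u * (u * a - a * u) - (u * a - a * u) * u) * a := by noncomm_ring
    rw [h2, h2] at e
    have : (2 : D) ≠ 0 := by
      have := (algebraMap F D).injective.ne (two_ne_zero (α := F))
      rwa [map_zero, map_ofNat] at this
    simpa [this] using e
  · push Not at h
    obtain ⟨x, y, hx, hy, hxy⟩ := h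
    have key : ∀ e a : D, ((x * y - y * x) * e) * a - a * ((x * y - y * x) * e) ∈ U := by
      intro e a
      have h1 := hU _ (hx (y * e)) a
      have h2 := hT y _ hy (hU _ (hx e)) a
      convert U.sub_mem h1 h2 using 1
      noncomm_ring
    have := key ((x * y - y * x)⁻¹ * b) c
    rwa [mul_inv_cancel_left₀ hxy] at this

lemma aux_ss_left (x : D) : Module.End.IsSemisimple (LinearMap.mulLeft F x) := by
  have hx : IsIntegral F x := Algebra.IsIntegral.isIntegral x
  refine Module.End.isSemisimple_of_squarefree_aeval_eq_zero
    (minpoly.irreducible hx).squarefree ?_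
  change Polynomial.aeval (Algebra.lmul F D x) _ = 0
  rw [Polynomial.aeval_algHom_apply, minpoly.aeval, map_zero]

lemma aux_ss_right (x : D) : Module.End.IsSemisimple (LinearMap.mulRight F x) := by
  have hx : IsIntegral F x := Algebra.IsIntegral.isIntegral x
  refine Module.End.isSemisimple_of_squarefree_aeval_eq_zero
    (minpoly.irreducible hx).squarefree ?_
  have : ∀ q : Polynomial F, Polynomial.aeval (LinearMap.mulRight F x) q
      = LinearMap.mulRight F (Polynomial.aeval x q) := by
    intro q
    induction q using Polynomial.induction_on' with
    | add p q hp hq => ext; simp [hp, hq, mul_add]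
    | monomial n a =>
      ext y
      simp [Polynomial.aeval_monomial, LinearMap.pow_mulRight, Algebra.smul_def]
      rw [← mul_assoc, Algebra.commutes]
  rw [this, minpoly.aeval]
  simp

lemma aux_ss (x : D) : Module.End.IsSemisimple (LinearMap.mulLeft F x - LinearMap.mulRight F x) :=
  Module.End.IsSemisimple.sub_of_commute (LinearMap.commute_mulLeft_right (R := F) x x)
    (aux_ss_left x) (aux_ss_right x)

/-- trace zero -/
noncomputable def auxD0 (F D : Type*) [Field F] [CharZero F] [DivisionRing D] [Algebra F D]
    [FiniteDimensional F D] : LieSubalgebra F D :=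
  { LinearMap.ker (auxTr F D) with
    lie_mem' := by
      intro x y _ _
      change auxTr F D (x * y - y * x) = 0
      rw [map_sub, aux_tr_comm, sub_self] }

lemma aux_mem (x : D) : x ∈ auxD0 F D ↔ auxTr F D x = 0 := Iff.rfl

lemma aux_decomp (a : D) : ∃ c : F, a - algebraMap F D c ∈ auxD0 F D := by
  refine ⟨(Module.finrank F D : F)⁻¹ * auxTr F D a, ?_⟩
  rw [aux_mem, map_sub, aux_tr_one, mul_inv_cancel_left₀ aux_fr, sub_self]

lemma aux_toral : IsToral F (auxD0 F D) := by
  intro x P hP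
  have hs := aux_ss (F := F) (x : D)
  rw [Module.End.isSemisimple_iff] at hs
  have hi : P.map (auxD0 F D).toSubmodule.subtype ∈ 
    Module.End.invtSubmodule (LinearMap.mulLeft F (x : D) - LinearMap.mulRight F (x : D)) := by
    rw [Module.End.mem_invtSubmodule_iff_forall_mem_of_mem]
    rintro _ ⟨y, hy, rfl⟩
    exact ⟨_, hP y hy, rfl⟩
  obtain ⟨q, hq, hpq⟩ := hs _ hi
  rw [Module.End.mem_invtSubmodule_iff_forall_mem_of_mem] at hq
  refine ⟨q.comap (auxD0 F D).toSubmodule.subtype, fun y hy => hq _ hy, ?_⟩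
  constructor
  · rw [Submodule.disjoint_def]
    intro y hy hy'
    have := Submodule.disjoint_def.1 hpq.disjoint (y : D) ⟨y, hy, rfl⟩ hy'
    exact Subtype.ext this
  · rw [codisjoint_iff, eq_top_iff]
    intro y _
    obtain ⟨_, ⟨u, hu, rfl⟩, v, hv, huv⟩ := Submodule.mem_sup.1
      (hpq.codisjoint.eq_top ▸ Submodule.mem_top : (y : D) ∈ _)
    refine Submodule.mem_sup.2 ⟨u, hu, y - u, ?_, by abel⟩
    have : ((y - u : auxD0 F D) : D) = v := by
      change (y : D) - (u : D) = v
      rw [← huv]; simp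
    change ((y - u : auxD0 F D) : D) ∈ q
    rwa [this]

lemma aux_toral_quot {L : Type*} [LieRing L] [LieAlgebra F L] (h : IsToral F L)
    (I : LieIdeal F L) : IsToral F (L ⧸ I) := by
  intro x P hP
  obtain ⟨x, rfl⟩ := LieSubmodule.Quotient.surjective_mk' I x
  let m : L →ₗ[F] L ⧸ I := (LieSubmodule.Quotient.mk' I : L →ₗ[F] L ⧸ I)
  have hm : Function.Surjective m := LieSubmodule.Quotient.surjective_mk' I
  obtain ⟨q, hq, hpq⟩ := h x (P.comap m) (fun y hy => hP _ hy)
  refine ⟨q.map m, ?_, ?_⟩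
  · rintro _ ⟨y, hy, rfl⟩
    exact ⟨_, hq y hy, rfl⟩
  constructor
  · rw [Submodule.disjoint_def]
    rintro _ hy ⟨y, hy', rfl⟩
    have := Submodule.disjoint_def.1 hpq.disjoint y hy hy'
    rw [this, map_zero]
  · rw [codisjoint_iff, ← Submodule.map_comap_eq_of_surjective hm P, ← Submodule.map_sup,
      hpq.codisjoint.eq_top, Submodule.map_top, LinearMap.range_eq_top.2 hm]

lemma aux_nonabelian (hc : Subalgebra.center F D = ⊥) (hdim : 1 < Module.finrank F D) :
    ¬ IsLieAbelian (auxD0 F D) := by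
  intro h
  have h0 : ∀ x ∈ auxD0 F D, ∀ y ∈ auxD0 F D, x * y = y * x := by
    intro x hx y hy
    have := congrArg Subtype.val (h.trivial ⟨x, hx⟩ ⟨y, hy⟩)
    exact sub_eq_zero.1 this
  have : Subalgebra.center F D = ⊤ := by
    rw [eq_top_iff]
    intro x _
    rw [Subalgebra.mem_center_iff]
    intro y
    obtain ⟨c, hx⟩ := aux_decomp (F := F) x
    obtain ⟨d, hy⟩ := aux_decomp (F := F) y
    have e := h0 _ hy _ hx
    rw [sub_mul, mul_sub, sub_mul, mul_sub, mul_sub, mul_sub, Algebra.commutes d x, ← Algebra.commutes c y,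
      Algebra.commutes c (algebraMap F D d)] at e
    have : y * x - x * y = (0 : D) := by
      rw [← sub_eq_zero] at e
      rw [← e]; abel
    exact sub_eq_zero.1 this
  rw [hc] at this
  have h1 := Subalgebra.bot_eq_top_iff_finrank_eq_one.1 this
  omega

lemma aux_simple (hc : Subalgebra.center F D = ⊥) (hdim : 1 < Module.finrank F D) :
    LieAlgebra.IsSimple F (auxD0 F D) := by
  refine ⟨fun I => ?_, aux_nonabelian hc hdim⟩
  by_cases hI : I = ⊥
  · exact Or.inl hI
  right
  rw [LieSubmodule.eq_bot_iff] at hI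
  push Not at hI
  obtain ⟨v, hv, hv0⟩ := hI
  let U : Submodule F D := (I : Submodule F (auxD0 F D)).map (auxD0 F D).toSubmodule.subtype
  have hU : ∀ u ∈ U, ∀ a : D, u * a - a * u ∈ U := by
    rintro _ ⟨(u : auxD0 F D), hu, rfl⟩ a
    obtain ⟨c, ha⟩ := aux_decomp (F := F) a
    refine ⟨(⁅(u : auxD0 F D), (⟨_, ha⟩ : auxD0 F D)⁆ : auxD0 F D), ?_, ?_⟩
    · exact lie_mem_left F _ I u _ hu
    · change (u : D) * (a - algebraMap F D c) - (a - algebraMap F D c) * u = u * a - a * u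
      rw [mul_sub, sub_mul, Algebra.commutes c (u : D)]
      abel
  have hv1 : ∃ a : D, (v : D) * a - a * v ≠ 0 := by
    by_contra! hcon
    have : (v : D) ∈ Subalgebra.center F D := by
      rw [Subalgebra.mem_center_iff]
      intro b
      exact (sub_eq_zero.1 (hcon b)).symm
    rw [hc, Algebra.mem_bot] at this
    obtain ⟨c, hcv⟩ := this
    have h1 := v.2
    rw [aux_mem, ← hcv, aux_tr_one] at h1
    have : c = 0 := (mul_eq_zero.1 h1).resolve_left aux_fr
    rw [this, map_zero] at hcv
    exact hv0 (Subtype.ext hcv.symm)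
  obtain ⟨a, hva⟩ := hv1
  rw [eq_top_iff]
  intro w _
  obtain ⟨w', hw', e⟩ := aux_comm_span hc U
    (aux_herstein U hU v a ⟨v, hv, rfl⟩ hva) w w.2
  have : w' = w := Subtype.ext e
  exact this ▸ hw'

end Aux

/-- Let `D` be a finite-dimensional central division algebra over `ℚ_p` of dimension
`> 1`, and let `D₀` be the set of `x ∈ D` such that left multiplication by `x` has trace
zero. Then `D₀` is closed under the commutator bracket (it is a Lie subalgebra of `D`),
and as a Lie algebra over `ℚ_p` it is simple, perfect and toral; in particular it is not
pluperfect. -/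
theorem stmt_13 (p : ℕ) [Fact p.Prime] (D : Type*) [DivisionRing D] [Algebra ℚ_[p] D]
    [FiniteDimensional ℚ_[p] D]
    (hcentral : Subalgebra.center ℚ_[p] D = ⊥)
    (hdim : 1 < Module.finrank ℚ_[p] D) :
    ∃ D₀ : LieSubalgebra ℚ_[p] D,
      (∀ x : D, x ∈ D₀ ↔ LinearMap.trace ℚ_[p] D (LinearMap.mulLeft ℚ_[p] x) = 0) ∧
      LieAlgebra.IsSimple ℚ_[p] D₀ ∧
      ⁅(⊤ : LieIdeal ℚ_[p] D₀), (⊤ : LieIdeal ℚ_[p] D₀)⁆ = ⊤ ∧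
      IsToral ℚ_[p] D₀ ∧
      ¬ IsPluperfect ℚ_[p] D₀ := by
  have hs := aux_simple hcentral hdim
  refine ⟨auxD0 ℚ_[p] D, fun x => Iff.rfl, hs, ?_, aux_toral, fun h => ?_⟩
  · refine (hs.eq_bot_or_eq_top _).resolve_left fun h => hs.non_abelian ?_
    refine ⟨fun x m => ?_⟩
    have := LieSubmodule.lie_mem_lie (I := (⊤ : LieIdeal ℚ_[p] (auxD0 ℚ_[p] D)))
      (N := (⊤ : LieIdeal ℚ_[p] (auxD0 ℚ_[p] D)))
      (LieSubmodule.mem_top x) (LieSubmodule.mem_top m)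
    rw [h] at this
    simpa using this
  · have h1 := h ⊥ (aux_toral_quot aux_toral ⊥)
    refine hs.non_abelian ⟨fun x m => ?_⟩
    have : ⁅x, m⁆ ∈ (⊥ : LieIdeal ℚ_[p] (auxD0 ℚ_[p] D)) := h1 ▸ LieSubmodule.mem_top _
    simpa using this
end

section
/- Let p be a prime, A a commutative Noetherian local ring with maximal ideal 𝔪 and residue field A/𝔪 ≅ 𝔽_p, n ≥ 2 and k ≥ 1. Let SL_n^k(A) denote the kernel of the reduction homomorphism SL_n(A) → SL_n(A/𝔪^k). Then SL_n^{k+1}(A) is a normal subgroup of SL_n^k(A), and the quotient group SL_n^k(A)/SL_n^{k+1}(A) is isomorphic to the additive group of n×n matrices with entries in the A-module 𝔪^k/𝔪^{k+1} whose trace (the sum of the diagonal entries) is zero. (Equivalently, it is isomorphic to (𝔪^k/𝔪^{k+1}) ⊗_ℤ M_n^0(ℤ), where M_n^0(ℤ) is the additive group of trace-zero n×n integer matrices.) -/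
set_option autoImplicit false

/-- For an ideal `I` of a commutative ring `A`, the congruence subgroup
`SL_n^I(A) = ker (SL_n(A) → SL_n(A/I))`. -/
def SLCong (n : ℕ) {A : Type*} [CommRing A] (I : Ideal A) :
    Subgroup (Matrix.SpecialLinearGroup (Fin n) A) :=
  (Matrix.SpecialLinearGroup.map (Ideal.Quotient.mk I)).ker

/-- The additive group of `n × n` matrices with entries in an ideal `V` of `B` and
trace zero. -/
def traceZeroMatricesIn (n : ℕ) {B : Type*} [CommRing B] (V : Ideal B) :
    AddSubgroup (Matrix (Fin n) (Fin n) B) where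
  carrier := {M | (∀ i j, M i j ∈ V) ∧ Matrix.trace M = 0}
  zero_mem' := ⟨fun i j => by simp, by simp⟩
  add_mem' := by
    rintro M N ⟨hM, hM0⟩ ⟨hN, hN0⟩
    refine ⟨fun i j => ?_, by simp [Matrix.trace_add, hM0, hN0]⟩
    simpa using V.add_mem (hM i j) (hN i j)
  neg_mem' := by
    rintro M ⟨hM, hM0⟩
    refine ⟨fun i j => ?_, by simp [Matrix.trace_neg, hM0]⟩
    simpa using V.neg_mem (hM i j)

instance slCong_normal (n : ℕ) {A : Type*} [CommRing A] (I : Ideal A) :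
    (SLCong n I).Normal :=
  MonoidHom.normal_ker _

theorem prod_one_add_sq_zero {ι B : Type*} [CommRing B] (V : Ideal B)
    (hV : ∀ x ∈ V, ∀ y ∈ V, x * y = 0) (s : Finset ι) (f : ι → B) (hf : ∀ i, f i ∈ V) :
    ∏ i ∈ s, (1 + f i) = 1 + ∑ i ∈ s, f i := by
  classical
  induction s using Finset.induction_on with
  | empty => simp
  | insert a s ha ih =>
    rw [Finset.prod_insert ha, Finset.sum_insert ha, ih]
    have := hV _ (hf a) _ (V.sum_mem (fun i (_ : i ∈ s) => hf i))
    linear_combination this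

theorem det_one_add_sq_zero {n : ℕ} {B : Type*} [CommRing B] (V : Ideal B)
    (hV : ∀ x ∈ V, ∀ y ∈ V, x * y = 0) (M : Matrix (Fin n) (Fin n) B)
    (hM : ∀ i j, M i j ∈ V) : (1 + M).det = 1 + M.trace := by
  rw [Matrix.det_apply, Finset.sum_eq_single (1 : Equiv.Perm (Fin n))]
  · simp [Matrix.trace, prod_one_add_sq_zero V hV _ (fun i => M i i) (fun i => hM i i)]
  · intro σ _ hσ
    obtain ⟨i, hi⟩ : ∃ i, σ i ≠ i := by
      by_contra! h
      exact hσ (Equiv.ext h)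
    have h2 : σ (σ i) ≠ σ i := fun h => hi (σ.injective h)
    have : ∏ j, (1 + M) (σ j) j = 0 := by
      rw [← Finset.mul_prod_erase _ _ (Finset.mem_univ i),
        ← Finset.mul_prod_erase _ _ (Finset.mem_erase.2 ⟨hi, Finset.mem_univ (σ i)⟩),
        ← mul_assoc]
      have : (1 + M) (σ i) i * (1 + M) (σ (σ i)) (σ i) = 0 := by
        simp only [Matrix.add_apply, Matrix.one_apply_ne hi, Matrix.one_apply_ne h2, zero_add]
        exact hV _ (hM _ _) _ (hM _ _)
      rw [this, zero_mul]
    rw [this, smul_zero]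
  · simp

theorem mem_SLCong_iff {n : ℕ} {A : Type*} [CommRing A] (I : Ideal A)
    (g : Matrix.SpecialLinearGroup (Fin n) A) :
    g ∈ SLCong n I ↔ ∀ i j, g.1 i j - (1 : Matrix (Fin n) (Fin n) A) i j ∈ I := by
  rw [SLCong, MonoidHom.mem_ker, Matrix.SpecialLinearGroup.ext_iff]
  refine forall_congr' fun i => forall_congr' fun j => ?_
  rw [← Ideal.Quotient.eq]
  by_cases h : i = j
  · subst h; simp
  · simp [h]

theorem mem_tz {n : ℕ} {B : Type*} [CommRing B] (V : Ideal B) (M : Matrix (Fin n) (Fin n) B) :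
    M ∈ traceZeroMatricesIn n V ↔ (∀ i j, M i j ∈ V) ∧ Matrix.trace M = 0 := Iff.rfl

/-- Reduction mod `J` minus the identity. -/
def redMat {n : ℕ} {A : Type*} [CommRing A] (J : Ideal A)
    (g : Matrix.SpecialLinearGroup (Fin n) A) : Matrix (Fin n) (Fin n) (A ⧸ J) :=
  (Ideal.Quotient.mk J).mapMatrix g.1 - 1

theorem redMat_entry {n : ℕ} {A : Type*} [CommRing A] (I J : Ideal A)
    (g : Matrix.SpecialLinearGroup (Fin n) A) (hg : g ∈ SLCong n I) (i j : Fin n) :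
    redMat J g i j ∈ Ideal.map (Ideal.Quotient.mk J) I := by
  have h := Ideal.mem_map_of_mem (Ideal.Quotient.mk J) ((mem_SLCong_iff I g).1 hg i j)
  rw [map_sub] at h
  convert h using 1
  by_cases hij : i = j
  · subst hij; simp [redMat]
  · simp [redMat, hij]

theorem sq_zero_map {A : Type*} [CommRing A] (I J : Ideal A) (hIJ : I * I ≤ J) :
    ∀ x ∈ Ideal.map (Ideal.Quotient.mk J) I, ∀ y ∈ Ideal.map (Ideal.Quotient.mk J) I,
      x * y = 0 := by
  intro x hx y hy
  obtain ⟨a, ha, rfl⟩ := (Ideal.mem_map_iff_of_surjective _ Ideal.Quotient.mk_surjective).1 hx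
  obtain ⟨b, hb, rfl⟩ := (Ideal.mem_map_iff_of_surjective _ Ideal.Quotient.mk_surjective).1 hy
  rw [← map_mul]
  exact Ideal.Quotient.eq_zero_iff_mem.2 (hIJ (Ideal.mul_mem_mul ha hb))

theorem redMat_mem {n : ℕ} {A : Type*} [CommRing A] (I J : Ideal A) (hIJ : I * I ≤ J)
    (g : Matrix.SpecialLinearGroup (Fin n) A) (hg : g ∈ SLCong n I) :
    redMat J g ∈ traceZeroMatricesIn n (Ideal.map (Ideal.Quotient.mk J) I) := by
  refine ⟨redMat_entry I J g hg, ?_⟩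
  have h := det_one_add_sq_zero _ (sq_zero_map I J hIJ) _ (redMat_entry I J g hg)
  have h1 : (1 + redMat J g).det = 1 := by
    rw [redMat, add_sub_cancel, ← RingHom.map_det, g.2, map_one]
  rw [h1] at h
  linear_combination -h

/-- The homomorphism `SL_n^I(A) → M_n^0(I/J)`. -/
def redHom (n : ℕ) {A : Type*} [CommRing A] (I J : Ideal A) (hIJ : I * I ≤ J) :
    SLCong n I →* Multiplicative (traceZeroMatricesIn n (Ideal.map (Ideal.Quotient.mk J) I)) :=
  MonoidHom.mk' (fun g => Multiplicative.ofAdd ⟨redMat J g.1, redMat_mem I J hIJ g.1 g.2⟩) (by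
    intro g h
    rw [← ofAdd_add]
    congr 1
    apply Subtype.ext
    change redMat J (g.1 * h.1) = redMat J g.1 + redMat J h.1
    have h0 : redMat J g.1 * redMat J h.1 = 0 := by
      ext i j
      rw [Matrix.mul_apply]
      exact Finset.sum_eq_zero fun l _ => sq_zero_map I J hIJ _ (redMat_entry I J _ g.2 _ _) _
        (redMat_entry I J _ h.2 _ _)
    have h1 : redMat J (g.1 * h.1) = redMat J g.1 + redMat J h.1 + redMat J g.1 * redMat J h.1 := by
      simp only [redMat, Matrix.SpecialLinearGroup.coe_mul, map_mul]
      noncomm_ring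
    rw [h1, h0, add_zero])

theorem redHom_ker (n : ℕ) {A : Type*} [CommRing A] (I J : Ideal A) (hIJ : I * I ≤ J) :
    (redHom n I J hIJ).ker = (SLCong n J).subgroupOf (SLCong n I) := by
  ext g
  rw [MonoidHom.mem_ker, Subgroup.mem_subgroupOf]
  change _ ↔ g.1 ∈ (Matrix.SpecialLinearGroup.map (Ideal.Quotient.mk J)).ker
  rw [MonoidHom.mem_ker]
  have : redHom n I J hIJ g = 1 ↔ redMat J g.1 = 0 :=
    ⟨fun h => congrArg (fun x => (Multiplicative.toAdd x).1) h, fun h => Subtype.ext h⟩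
  rw [this, redMat, sub_eq_zero]
  exact ⟨fun h => Subtype.ext h, fun h => congrArg Subtype.val h⟩

theorem redHom_surj (n : ℕ) (hn : 0 < n) {A : Type*} [CommRing A] [IsLocalRing A] (I J : Ideal A)
    (hIJ : I * I ≤ J) (hJI : J ≤ I) (hJ : J ≤ IsLocalRing.maximalIdeal A) :
    Function.Surjective (redHom n I J hIJ) := by
  intro x
  obtain ⟨M, hM, hM0⟩ := x
  have hl : ∀ i j, ∃ a ∈ I, Ideal.Quotient.mk J a = M i j := fun i j =>
    (Ideal.mem_map_iff_of_surjective _ Ideal.Quotient.mk_surjective).1 (hM i j)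
  choose f hf hfM using hl
  let N : Matrix (Fin n) (Fin n) A := 1 + Matrix.of f
  have hN : (Ideal.Quotient.mk J).mapMatrix N = 1 + M := by
    rw [map_add, map_one]
    congr 1
    ext i j
    exact hfM i j
  have hdet : Ideal.Quotient.mk J N.det = 1 := by
    rw [RingHom.map_det, hN, det_one_add_sq_zero _ (sq_zero_map I J hIJ) M hM]
    change 1 + M.trace = 1
    rw [show M.trace = 0 from hM0, add_zero]
  have hu : IsUnit N.det := by
    by_contra h
    have h1 : N.det ∈ IsLocalRing.maximalIdeal A := h
    have h2 : N.det - 1 ∈ J := by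
      rw [← Ideal.Quotient.eq, hdet, map_one]
    have h3 := (IsLocalRing.maximalIdeal A).sub_mem h1 (hJ h2)
    rw [sub_sub_cancel] at h3
    exact (Ideal.ne_top_iff_one _).1 (IsLocalRing.maximalIdeal.isMaximal A).ne_top h3
  obtain ⟨v, hv⟩ := hu.exists_left_inv
  have hv1 : Ideal.Quotient.mk J v = 1 := by
    have := congrArg (Ideal.Quotient.mk J) hv
    rwa [map_mul, hdet, mul_one, map_one] at this
  let D : Matrix (Fin n) (Fin n) A := Matrix.diagonal (Function.update 1 ⟨0, hn⟩ v)
  have hD : (Ideal.Quotient.mk J).mapMatrix D = 1 := by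
    rw [RingHom.mapMatrix_apply, Matrix.diagonal_map (map_zero _), ← Matrix.diagonal_one]
    congr 1
    ext i
    by_cases h : i = ⟨0, hn⟩
    · subst h; simp [hv1]
    · simp [h]
  have hDd : D.det = v := by
    rw [Matrix.det_diagonal, Finset.prod_update_of_mem (Finset.mem_univ _)]
    simp
  let g : Matrix.SpecialLinearGroup (Fin n) A := ⟨D * N, by rw [Matrix.det_mul, hDd, hv]⟩
  have hg : redMat J g = M := by
    change (Ideal.Quotient.mk J).mapMatrix (D * N) - 1 = M
    rw [map_mul, hD, hN, one_mul, add_sub_cancel_left]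
  have hgI : g ∈ SLCong n I := by
    rw [mem_SLCong_iff]
    intro i j
    have h1 : Ideal.Quotient.mk J (g.1 i j - (1 : Matrix (Fin n) (Fin n) A) i j) =
        Ideal.Quotient.mk J (f i j) := by
      rw [hfM, ← hg, map_sub]
      by_cases hij : i = j
      · subst hij; simp [redMat]
      · simp [redMat, hij]
    have h2 := I.add_mem (hJI (Ideal.Quotient.eq.1 h1)) (hf i j)
    rwa [sub_add_cancel] at h2
  exact ⟨⟨g, hgI⟩, Subtype.ext hg⟩

/-- Let `A` be a commutative Noetherian local ring with maximal ideal `𝔪` and residue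
field `𝔽_p`, and let `n ≥ 2`, `k ≥ 1`.  Then `SL_n^{k+1}(A)` is a normal subgroup of
`SL_n^k(A)` and the quotient is isomorphic to the additive group of `n × n` matrices with
entries in `𝔪^k / 𝔪^{k+1}` (realized as the image of `𝔪^k` in `A ⧸ 𝔪^{k+1}`) of trace
zero. -/
theorem stmt_14 (p n k : ℕ) (hp : p.Prime) (hn : 2 ≤ n) (hk : 1 ≤ k)
    (A : Type*) [CommRing A] [IsNoetherianRing A] [IsLocalRing A]
    (hres : Nonempty (IsLocalRing.ResidueField A ≃+* ZMod p)) :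
    SLCong n ((IsLocalRing.maximalIdeal A) ^ (k + 1)) ≤
        SLCong n ((IsLocalRing.maximalIdeal A) ^ k) ∧
    ((SLCong n ((IsLocalRing.maximalIdeal A) ^ (k + 1))).subgroupOf
        (SLCong n ((IsLocalRing.maximalIdeal A) ^ k))).Normal ∧
    Nonempty
      ((SLCong n ((IsLocalRing.maximalIdeal A) ^ k) ⧸
          (SLCong n ((IsLocalRing.maximalIdeal A) ^ (k + 1))).subgroupOf
            (SLCong n ((IsLocalRing.maximalIdeal A) ^ k))) ≃*
        Multiplicative (traceZeroMatricesIn n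
          (Ideal.map (Ideal.Quotient.mk ((IsLocalRing.maximalIdeal A) ^ (k + 1)))
            ((IsLocalRing.maximalIdeal A) ^ k)))) := by
  have hJI : (IsLocalRing.maximalIdeal A) ^ (k + 1) ≤ (IsLocalRing.maximalIdeal A) ^ k :=
    Ideal.pow_le_pow_right (Nat.le_succ k)
  have hIJ : (IsLocalRing.maximalIdeal A) ^ k * (IsLocalRing.maximalIdeal A) ^ k ≤
      (IsLocalRing.maximalIdeal A) ^ (k + 1) := by
    rw [← pow_add]
    exact Ideal.pow_le_pow_right (by omega)
  refine ⟨fun g hg => ?_, inferInstance, ⟨?_⟩⟩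
  · rw [mem_SLCong_iff] at hg ⊢
    exact fun i j => hJI (hg i j)
  · exact (QuotientGroup.quotientMulEquivOfEq (redHom_ker n _ _ hIJ).symm).trans
      (QuotientGroup.quotientKerEquivOfSurjective _
        (redHom_surj n (by omega) _ _ hIJ hJI (Ideal.pow_le_self (Nat.succ_ne_zero k))))
end

section
/- Let R be a commutative local ring with maximal ideal 𝔪, let I ⊆ R be an ideal, and let n ≥ 1 and k ≥ 1. Then for every matrix x ∈ SL_n(R/I) whose image in SL_n(R/(I + 𝔪^k)) is the identity matrix, there exists c ∈ SL_n(R) such that the entrywise image of c in SL_n(R/I) equals x and the image of c in SL_n(R/𝔪^k) is the identity matrix. -/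
/-- Let `R` be a commutative local ring with maximal ideal `𝔪`, `I` an ideal of `R`, and
`n, k ≥ 1`.  Every `x ∈ SL_n(R ⧸ I)` whose image in `SL_n(R ⧸ (I ⊔ 𝔪^k))` is the
identity lifts to some `c ∈ SL_n(R)` which reduces to `x` modulo `I` and to the identity
modulo `𝔪^k`. -/
theorem stmt_15 (R : Type*) [CommRing R] [IsLocalRing R] (I : Ideal R) (n k : ℕ)
    (hn : 1 ≤ n) (hk : 1 ≤ k)
    (x : Matrix.SpecialLinearGroup (Fin n) (R ⧸ I))
    (hx : Matrix.SpecialLinearGroup.map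
      (Ideal.Quotient.factor
        (le_sup_left : I ≤ I ⊔ (IsLocalRing.maximalIdeal R) ^ k)) x = 1) :
    ∃ c : Matrix.SpecialLinearGroup (Fin n) R,
      Matrix.SpecialLinearGroup.map (Ideal.Quotient.mk I) c = x ∧
      Matrix.SpecialLinearGroup.map
        (Ideal.Quotient.mk ((IsLocalRing.maximalIdeal R) ^ k)) c = 1 := by
  classical
  set J := (IsLocalRing.maximalIdeal R) ^ k with hJ
  have key : ∀ i j, ∃ b : R, Ideal.Quotient.mk I b = x.1 i j ∧
      Ideal.Quotient.mk J b = (1 : Matrix (Fin n) (Fin n) (R ⧸ J)) i j := by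
    intro i j
    obtain ⟨a, ha⟩ := Ideal.Quotient.mk_surjective (x.1 i j)
    have h1 := congrArg (fun y => y.1 i j) hx
    simp only [Matrix.SpecialLinearGroup.map_apply_coe, RingHom.mapMatrix_apply,
      Matrix.map_apply, ← ha, Ideal.Quotient.factor_mk, Matrix.SpecialLinearGroup.coe_one] at h1
    have h2 : a - (1 : Matrix (Fin n) (Fin n) R) i j ∈ I ⊔ J := by
      rw [← Ideal.Quotient.eq, h1]
      by_cases hij : i = j <;> simp [Matrix.one_apply, hij]
    obtain ⟨u, hu, v, hv, huv⟩ := Submodule.mem_sup.1 h2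
    refine ⟨(1 : Matrix (Fin n) (Fin n) R) i j + v, ?_, ?_⟩
    · rw [← ha, Ideal.Quotient.eq]
      have : (1 : Matrix (Fin n) (Fin n) R) i j + v - a = -u := by
        linear_combination huv
      rw [this]
      exact I.neg_mem hu
    · rw [map_add, Ideal.Quotient.eq_zero_iff_mem.2 hv, add_zero]
      by_cases hij : i = j <;> simp [Matrix.one_apply, hij]
  choose b hbI hbJ using key
  let B : Matrix (Fin n) (Fin n) R := Matrix.of b
  have hBI : (Ideal.Quotient.mk I).mapMatrix B = x.1 := by
    ext i j; exact hbI i j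
  have hBJ : (Ideal.Quotient.mk J).mapMatrix B = 1 := by
    ext i j; exact hbJ i j
  have hdI : Ideal.Quotient.mk I B.det = 1 := by
    rw [RingHom.map_det, hBI, x.2]
  have hdJ : Ideal.Quotient.mk J B.det = 1 := by
    rw [RingHom.map_det, hBJ, Matrix.det_one]
  have hunit : IsUnit B.det := by
    by_contra h
    have h1 : B.det ∈ IsLocalRing.maximalIdeal R := (IsLocalRing.mem_maximalIdeal _).2 h
    have h2 : B.det - 1 ∈ J := by
      rw [← Ideal.Quotient.eq, hdJ, map_one]
    have h3 := Ideal.pow_le_self (by omega) h2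
    have h4 : (1 : R) ∈ IsLocalRing.maximalIdeal R := by
      have := Ideal.sub_mem _ h1 h3
      simpa using this
    exact (Ideal.ne_top_iff_one _).1 (IsLocalRing.maximalIdeal.isMaximal R).ne_top h4
  obtain ⟨d, hd⟩ := hunit.exists_left_inv
  let i0 : Fin n := ⟨0, hn⟩
  let D : Matrix (Fin n) (Fin n) R := Matrix.diagonal (Function.update 1 i0 d)
  have hD : D.det = d := by
    simp [D, Matrix.det_diagonal, Finset.prod_update_of_mem]
  have hDq : ∀ K : Ideal R, Ideal.Quotient.mk K B.det = 1 →
      (Ideal.Quotient.mk K).mapMatrix D = 1 := by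
    intro K hK
    have h1 : Ideal.Quotient.mk K d = 1 := by
      have := congrArg (Ideal.Quotient.mk K) hd
      simpa [hK] using this
    ext i j
    by_cases hij : i = j
    · subst hij
      by_cases hi : i = i0
      · subst hi; simp [D, h1]
      · simp [D, hi]
    · simp [D, hij]
  refine ⟨⟨D * B, by rw [Matrix.det_mul, hD, hd]⟩, ?_, ?_⟩
  · apply Subtype.ext
    change (Ideal.Quotient.mk I).mapMatrix (D * B) = x.1
    rw [map_mul, hDq I hdI, hBI, one_mul]
  · apply Subtype.ext
    change (Ideal.Quotient.mk J).mapMatrix (D * B) = 1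
    rw [map_mul, hDq J hdJ, hBJ, one_mul]
end

section
/- Let p be an odd prime and K a number field containing no primitive p-th root of unity. Let V = {α ∈ Kˣ : there exists a nonzero fractional ideal I of 𝓞_K with (α) = I^p}. Then the quotient group V/(Kˣ)^p is finite and its cardinality equals p^{r₁ + r₂ − 1} times the cardinality of the p-torsion subgroup Cl_K[p] = {c ∈ Cl_K : c^p = 1} of the class group, where r₁ and r₂ denote the number of real and complex places of K respectively. -/
set_option autoImplicit false

open scoped nonZeroDivisors

lemma aux_group {G J C : Type*} [CommGroup G] [CommGroup J] [CommGroup C]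
    (f : G →* J) (q : J →* C) (hq : Function.Surjective q) (hker : q.ker = f.range)
    (p : ℕ) (hJ : ∀ x : J, x ^ p = 1 → x = 1) (V : Subgroup G)
    (hV : ∀ a, a ∈ V ↔ ∃ I, f a = I ^ p) :
    (powMonoidHom p : G →* G).range.relIndex V =
      (powMonoidHom p : G →* G).range.relIndex f.ker * Nat.card {c : C // c ^ p = 1} := by
  have hinj : ∀ x y : J, x ^ p = y ^ p → x = y := by
    intro x y h
    have := hJ (x / y) (by rw [div_pow, h, div_self'])
    exact div_eq_one.mp this
  have hVx : ∀ a : V, ∃ I, f a = I ^ p := fun a => (hV a).1 a.2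
  choose r hr using hVx
  let φ : V →* C :=
    { toFun := fun a => q (r a)
      map_one' := by
        have : r 1 = 1 := hinj _ _ (by rw [← hr]; simp)
        rw [this, map_one]
      map_mul' := by
        intro a b
        have : r (a * b) = r a * r b := hinj _ _ (by rw [← hr, mul_pow, ← hr, ← hr]; simp)
        rw [this, map_mul] }
  have hφ : ∀ a, φ a = q (r a) := fun a => rfl
  have hk : φ.ker = ((powMonoidHom p : G →* G).range ⊔ f.ker).subgroupOf V := by
    ext a
    rw [MonoidHom.mem_ker, Subgroup.mem_subgroupOf, hφ, ← MonoidHom.mem_ker, hker,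
      Subgroup.mem_sup]
    constructor
    · rintro ⟨b, hb⟩
      refine ⟨b ^ p, ⟨b, rfl⟩, (a : G) / b ^ p, ?_, by simp⟩
      rw [MonoidHom.mem_ker, map_div, hr, map_pow, hb, div_self']
    · rintro ⟨_, ⟨b, rfl⟩, u, hu, h⟩
      refine ⟨b, hinj _ _ ?_⟩
      rw [← hr, ← h, map_mul, hu, mul_one]; simp
  have hrange : (φ.range : Set C) = {c : C | c ^ p = 1} := by
    ext c
    constructor
    · rintro ⟨a, rfl⟩
      change φ a ^ p = 1
      rw [hφ, ← map_pow, ← hr, ← MonoidHom.mem_ker, hker]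
      exact ⟨_, rfl⟩
    · intro hc
      obtain ⟨I, rfl⟩ := hq c
      have hc : I ^ p ∈ q.ker := by rw [MonoidHom.mem_ker, map_pow]; exact hc
      rw [hker] at hc
      obtain ⟨a, ha⟩ := hc
      refine ⟨⟨a, (hV a).2 ⟨I, ha⟩⟩, ?_⟩
      rw [hφ]
      congr 1
      apply hinj
      rw [← hr]; exact ha
  have hle : (powMonoidHom p : G →* G).range ⊔ f.ker ≤ V := by
    refine sup_le ?_ ?_
    · rintro _ ⟨b, rfl⟩
      exact (hV _).2 ⟨f b, by simp⟩
    · intro u hu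
      exact (hV _).2 ⟨1, by rw [one_pow]; exact hu⟩
  rw [← Subgroup.relIndex_mul_relIndex _ _ _ le_sup_left hle, Subgroup.relIndex_sup_left]
  congr 1
  rw [Subgroup.relIndex, ← hk, Subgroup.index_ker]
  exact Nat.card_congr (Equiv.setCongr hrange)

lemma aux_torsionfree {R K : Type*} [CommRing R] [IsDedekindDomain R] [Field K] [Algebra R K]
    [IsFractionRing R K] (p : ℕ) (hp : p ≠ 0) (I : (FractionalIdeal R⁰ K)ˣ) (h : I ^ p = 1) :
    I = 1 := by
  ext1
  rw [← FractionalIdeal.finprod_heightOneSpectrum_factorization' K I.ne_zero]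
  have : ∀ v : IsDedekindDomain.HeightOneSpectrum R,
      FractionalIdeal.count K v (I : FractionalIdeal R⁰ K) = 0 := by
    intro v
    have h1 := FractionalIdeal.count_pow K v p (I : FractionalIdeal R⁰ K)
    rw [← Units.val_pow_eq_pow_val, h, Units.val_one, FractionalIdeal.count_one] at h1
    simpa [hp] using h1.symm
  simp [this]

lemma aux_ker {R K : Type*} [CommRing R] [IsDomain R] [Field K] [Algebra R K]
    [IsFractionRing R K] :
    (toPrincipalIdeal R K).ker = (Units.map (algebraMap R K : R →* K)).range := by
  ext x
  rw [MonoidHom.mem_ker]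
  constructor
  · intro h
    have key : ∀ y : Kˣ, toPrincipalIdeal R K y = 1 → ∃ a : R, algebraMap R K a = y := by
      intro y hy
      rw [toPrincipalIdeal_eq_iff, Units.val_one] at hy
      have := FractionalIdeal.mem_spanSingleton_self R⁰ (y : K)
      rw [hy, FractionalIdeal.mem_one_iff] at this
      exact this
    obtain ⟨a, ha⟩ := key x h
    obtain ⟨b, hb⟩ := key x⁻¹ (by rw [map_inv, h, inv_one])
    have hab : a * b = 1 := by
      apply FaithfulSMul.algebraMap_injective R K
      rw [map_mul, ha, hb]; simp
    refine ⟨⟨a, b, hab, by rw [mul_comm, hab]⟩, ?_⟩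
    ext1
    exact ha
  · rintro ⟨u, rfl⟩
    rw [toPrincipalIdeal_eq_iff, Units.val_one]
    apply le_antisymm
    · rw [FractionalIdeal.spanSingleton_le_iff_mem, FractionalIdeal.mem_one_iff]
      exact ⟨u, rfl⟩
    · rw [FractionalIdeal.one_le, FractionalIdeal.mem_spanSingleton]
      refine ⟨(u⁻¹ : Rˣ), ?_⟩
      rw [Algebra.smul_def]
      simp [← map_mul]

lemma aux_quot {A B : Type*} [CommGroup A] [CommGroup B] (π : A →* B)
    (hπ : Function.Surjective π) (p : ℕ) (h : π.ker ≤ (powMonoidHom p : A →* A).range) :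
    (powMonoidHom p : A →* A).range.index =
      (nsmulAddMonoidHom (α := Additive B) p).range.index := by
  rw [← Subgroup.index_map_eq _ hπ h]
  have hmap : Subgroup.map π (powMonoidHom p : A →* A).range =
      (powMonoidHom p : B →* B).range := by
    ext x
    constructor
    · rintro ⟨_, ⟨y, rfl⟩, rfl⟩
      exact ⟨π y, by simp⟩
    · rintro ⟨y, rfl⟩
      obtain ⟨z, rfl⟩ := hπ y
      exact ⟨z ^ p, ⟨z, rfl⟩, by simp⟩
  rw [hmap]
  rfl

lemma aux_units (p : ℕ) (hp : p.Prime) (K : Type*) [Field K] [NumberField K]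
    (hmu : ∀ ζ : K, ¬ IsPrimitiveRoot ζ p) :
    (powMonoidHom p : (NumberField.RingOfIntegers K)ˣ →* _).range.index =
      p ^ NumberField.Units.rank K := by
  let T := NumberField.Units.torsion K
  have hcop : (Nat.card T).Coprime p := by
    rw [Nat.coprime_comm, hp.coprime_iff_not_dvd]
    intro hdvd
    haveI := Fact.mk hp
    obtain ⟨x, hx⟩ := exists_prime_orderOf_dvd_card' p hdvd
    have h1 := IsPrimitiveRoot.orderOf x
    rw [hx] at h1
    have h2 := h1.map_of_injective (f := T.subtype) T.subtype_injective
    exact hmu _ (IsPrimitiveRoot.coe_coe_iff.2 h2)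
  have hT : (QuotientGroup.mk' T).ker ≤
      (powMonoidHom p : (NumberField.RingOfIntegers K)ˣ →* _).range := by
    rw [QuotientGroup.ker_mk']
    intro t ht
    obtain ⟨s, hs⟩ := (powCoprime hcop).surjective ⟨t, ht⟩
    exact ⟨s, congrArg Subtype.val hs⟩
  have h := AddSubgroup.index_range_nsmul
    (Additive ((NumberField.RingOfIntegers K)ˣ ⧸ T)) p
  rw [NumberField.Units.finrank_modTorsion] at h
  rw [← h]
  exact aux_quot (B := (NumberField.RingOfIntegers K)ˣ ⧸ T) (QuotientGroup.mk' T)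
    (QuotientGroup.mk'_surjective T) p hT

theorem stmt_17 (p : ℕ) (hp : p.Prime) (hodd : Odd p)
    (K : Type*) [Field K] [NumberField K]
    (hmu : ∀ ζ : K, ¬ IsPrimitiveRoot ζ p)
    (V : Subgroup Kˣ)
    (hV : ∀ α : Kˣ, α ∈ V ↔
      ∃ I : (FractionalIdeal (NumberField.RingOfIntegers K)⁰ K)ˣ,
        FractionalIdeal.spanSingleton (NumberField.RingOfIntegers K)⁰ (α : K) =
          (I : FractionalIdeal (NumberField.RingOfIntegers K)⁰ K) ^ p) :
    Finite (V ⧸ ((powMonoidHom p : Kˣ →* Kˣ).range.subgroupOf V)) ∧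
    Nat.card (V ⧸ ((powMonoidHom p : Kˣ →* Kˣ).range.subgroupOf V)) =
      p ^ (NumberField.InfinitePlace.nrRealPlaces K +
          NumberField.InfinitePlace.nrComplexPlaces K - 1) *
        Nat.card {c : ClassGroup (NumberField.RingOfIntegers K) // c ^ p = 1} := by
  have hker : (ClassGroup.mk K : _ →* ClassGroup (NumberField.RingOfIntegers K)).ker =
      (toPrincipalIdeal (NumberField.RingOfIntegers K) K).range := by
    ext I
    rw [MonoidHom.mem_ker, ← (ClassGroup.equiv K).injective.eq_iff]
    simp [ClassGroup.equiv_mk, Units.ext_iff]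
  have hsurj : Function.Surjective
      (ClassGroup.mk K : _ →* ClassGroup (NumberField.RingOfIntegers K)) := by
    intro c
    exact ClassGroup.induction (K := K) (P := fun c => ∃ I, ClassGroup.mk K I = c)
      (fun I => ⟨I, rfl⟩) c
  have hmain : Nat.card (V ⧸ ((powMonoidHom p : Kˣ →* Kˣ).range.subgroupOf V)) =
      p ^ (NumberField.InfinitePlace.nrRealPlaces K +
          NumberField.InfinitePlace.nrComplexPlaces K - 1) *
        Nat.card {c : ClassGroup (NumberField.RingOfIntegers K) // c ^ p = 1} := by
    rw [← NumberField.InfinitePlace.card_eq_nrRealPlaces_add_nrComplexPlaces]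
    have h1 := aux_group (toPrincipalIdeal (NumberField.RingOfIntegers K) K) (ClassGroup.mk K)
      hsurj hker p (aux_torsionfree p hp.ne_zero) V (by
        intro a
        rw [hV]
        simp)
    refine h1.trans ?_
    congr 1
    rw [aux_ker, ← Subgroup.index_comap]
    refine Eq.trans ?_ (aux_units p hp K hmu)
    congr 1
    ext u
    constructor
    · rintro ⟨g, hg⟩
      have hg' : g ∈ (toPrincipalIdeal (NumberField.RingOfIntegers K) K).ker := by
        apply aux_torsionfree p hp.ne_zero
        rw [← map_pow, ← MonoidHom.mem_ker, aux_ker]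
        exact ⟨u, hg.symm⟩
      rw [aux_ker] at hg'
      obtain ⟨w, rfl⟩ := hg'
      refine ⟨w, Units.map_injective
        (FaithfulSMul.algebraMap_injective (NumberField.RingOfIntegers K) K) ?_⟩
      refine Eq.trans ?_ hg
      simp
    · rintro ⟨w, rfl⟩
      exact ⟨Units.map (algebraMap (NumberField.RingOfIntegers K) K : _ →* K) w, by simp⟩
  refine ⟨?_, hmain⟩
  apply Nat.finite_of_card_ne_zero
  rw [hmain]
  refine mul_ne_zero (pow_ne_zero _ hp.ne_zero) ?_
  haveI : Nonempty {c : ClassGroup (NumberField.RingOfIntegers K) // c ^ p = 1} := ⟨⟨1, by simp⟩⟩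
  exact Nat.card_pos.ne'
end
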